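/- arXiv:2603.03869 — 4 statements merged into one kernel-verified Lean document; each statement's English description precedes it below -/
import Mathlib

section
/- Let (M, ρ) be a metric space and let a < b be real numbers. If γ : [a,b] → M is continuous, then Var_γ = LVar_γ; that is, the total variation of γ equals the supremum over all 1-Lipschitz functions f : M → ℝ of the total variation of f ∘ γ. -/
/-!
Composing with a 1-Lipschitz map does not increase variation, so `LVar ≤ Var`. For the converse it
suffices, given `a ≤ t₀ ≤ ⋯ ≤ tₙ ≤ b` and `ε > 0`, to find one 1-Lipschitz `u` whose variation along
`γ` on each `[tⱼ, tⱼ₊₁]` is at least `ρⱼ - ε`, where `ρⱼ = dist (γ tⱼ) (γ tⱼ₊₁)`.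

Let `hⱼ = dist · (γ tⱼ)`. By continuity `hⱼ ∘ γ` takes every value of `[0, ρⱼ]` on `[tⱼ, tⱼ₊₁]`, and
choosing first hitting times transports Lebesgue measure on `[0, ρⱼ]` to a measure `μⱼ` on the image
of the `j`-th piece of `γ`, of mass `ρⱼ`, with `μⱼ A ≤ |hⱼ(A)|` for every Borel set `A`
(`exists_level_measure`). Split `M` into Borel sets `Bᵢ` on which `μᵢ` dominates all the `μⱼ`
(`exists_dominating_partition`) and approximate them from inside by disjoint compact sets `Dᵢ`. On
`Dᵢ` let `u` be `hᵢ` followed by a triangle wave with slopes `±1` and amplitude so small that these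
functions glue to a 1-Lipschitz function (`exists_lipschitz_locally_isometric`); shrinking the `Dᵢ`
further, no corner of the wave is met. If an arc `γ(I)` of the `j`-th piece is short, it meets only
one `Dᵢ`, and with `A = γ(I) ∩ Dᵢ`

  `μⱼ A ≤ μᵢ A ≤ |hᵢ(A)| ≤ diam hᵢ(A) = diam u(A) ≤ Var (u ∘ γ, I)`.

Summing over short intervals `I` shows that the variation of `u ∘ γ` on the `j`-th piece is at least
`μⱼ (⋃ᵢ Dᵢ)`, which is nearly `ρⱼ` (`exists_lipschitz_variation`).
-/

open Set ENNReal

/-- The total variation of `γ` on `[a, b]`: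
the supremum over all finite partitions `a = t₀ < t₁ < ⋯ < t_N = b` of
`∑ ρ(γ(t_{i-1}), γ(t_i))`, valued in `[0, ∞]`. -/
noncomputable def Var {M : Type*} [PseudoEMetricSpace M] (a b : ℝ) (γ : ℝ → M) : ℝ≥0∞ :=
  eVariationOn γ (Set.Icc a b)

/-- The Lipschitz variation of `γ` on `[a, b]`:
`LVar γ = sup { Var (f ∘ γ) : f : M → ℝ is 1-Lipschitz }`. -/
noncomputable def LVar {M : Type*} [PseudoEMetricSpace M] (a b : ℝ) (γ : ℝ → M) : ℝ≥0∞ :=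
  ⨆ f : {f : M → ℝ // LipschitzWith 1 f}, Var a b (f.1 ∘ γ)

/-- `LCJ M = inf { LVar γ / Var γ : γ : [a,b] → M, a < b, 0 < Var γ < ∞ }`. -/
noncomputable def LCJ (M : Type*) [PseudoEMetricSpace M] : ℝ≥0∞ :=
  ⨅ (a : ℝ) (b : ℝ) (_ : a < b) (γ : ℝ → M) (_ : 0 < Var a b γ) (_ : Var a b γ < ⊤),
    LVar a b γ / Var a b γ

open MeasureTheory Metric

/-- A bound of a measure by the variation on all short intervals passes to long ones, because the
measure is subadditive and the variation is additive under concatenation. -/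
lemma measure_le_eVariationOn_of_local {f : ℝ → ℝ} {ν : Measure ℝ} {η a b : ℝ} (hη : 0 < η)
    (hab : a ≤ b)
    (h : ∀ x y, a ≤ x → x ≤ y → y ≤ b → y - x < η → ν (Icc x y) ≤ eVariationOn f (Icc x y)) :
    ν (Icc a b) ≤ eVariationOn f (Icc a b) := by
  have key : ∀ n : ℕ, ∀ c, a ≤ c → c ≤ b → c - a < (n + 1) * (η / 2) →
      ν (Icc a c) ≤ eVariationOn f (Icc a c) := by
    intro n
    induction n with
    | zero =>
      intro c hac hcb hc
      exact h a c le_rfl hac hcb (by norm_num at hc; linarith)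
    | succ n ih =>
      intro c hac hcb hc
      by_cases hs : c - a < η
      · exact h a c le_rfl hac hcb hs
      · have h1 : a ≤ c - η / 2 := by linarith
        have h2 : c - η / 2 ≤ c := by linarith
        have h3 := eVariationOn.Icc_add_Icc f (s := univ) h1 h2 (mem_univ _)
        simp only [univ_inter] at h3
        rw [← h3, ← Icc_union_Icc_eq_Icc h1 h2]
        refine (measure_union_le _ _).trans (add_le_add ?_ ?_)
        · exact ih _ h1 (by linarith) (by push_cast at hc; linarith)
        · exact h _ _ h1 h2 hcb (by linarith)
  obtain ⟨n, hn⟩ := exists_nat_gt ((b - a) / (η / 2))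
  refine key n b hab le_rfl ?_
  rw [div_lt_iff₀ (by linarith)] at hn
  nlinarith

/-! ### The triangle wave -/

/-- The triangle wave of period `δ`: the distance from `r` to `δℤ`, encoded as the norm of the
class of `r` in `ℝ / δℤ`. -/
noncomputable def triangleWave (δ r : ℝ) : ℝ := ‖(r : AddCircle δ)‖

lemma abs_triangleWave_sub_le (δ r s : ℝ) : |triangleWave δ r - triangleWave δ s| ≤ |r - s| := by
  refine (abs_norm_sub_norm_le _ _).trans ?_
  rw [← AddCircle.coe_sub]
  exact QuotientAddGroup.norm_mk_le_norm (S := AddSubgroup.zmultiples δ) (m := r - s)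

lemma triangleWave_mem {δ : ℝ} (hδ : 0 < δ) (r : ℝ) : triangleWave δ r ∈ Icc 0 δ := by
  refine ⟨norm_nonneg _, ?_⟩
  have := AddCircle.norm_le_half_period δ (x := (r : AddCircle δ)) hδ.ne'
  rw [abs_of_pos hδ] at this
  unfold triangleWave
  linarith

/-- The set `(δ / 2)ℤ` of points where the slope of the triangle wave of period `δ` changes sign. -/
def corners (δ : ℝ) : Set ℝ := (fun r => r / (δ / 2)) ⁻¹' range ((↑) : ℤ → ℝ)

lemma isClosed_corners (δ : ℝ) : IsClosed (corners δ) :=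
  Int.isClosedEmbedding_coe_real.isClosed_range.preimage (by fun_prop)

lemma countable_corners {δ : ℝ} (hδ : 0 < δ) : (corners δ).Countable :=
  (countable_range _).preimage_of_injOn
    (fun x _ y _ h => by simpa [hδ.ne'] using (div_left_inj' (by positivity)).1 h)

lemma triangleWave_eq {δ r : ℝ} (hδ : 0 < δ) {k : ℤ} (hk : ⌊r / (δ / 2)⌋ = k) :
    triangleWave δ r = if Even k then r - k * (δ / 2) else (k + 1) * (δ / 2) - r := by
  obtain ⟨h1, h2⟩ := Int.floor_eq_iff.1 hk
  rw [le_div_iff₀ (by positivity)] at h1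
  rw [div_lt_iff₀ (by positivity)] at h2
  have shift : ∀ m : ℤ, |r - m * δ| ≤ δ / 2 → triangleWave δ r = |r - m * δ| := by
    intro m hm
    have := (AddCircle.norm_coe_eq_abs_iff δ (x := r - m * δ) hδ.ne').2 (by rwa [abs_of_pos hδ])
    rw [← this, triangleWave]
    congr 1
    rw [AddCircle.coe_sub, eq_comm, sub_eq_self, AddCircle.coe_eq_zero_iff]
    exact ⟨m, by simp⟩
  split_ifs with he
  · obtain ⟨m, rfl⟩ := he
    push_cast at *
    have : |r - m * δ| = r - m * δ := abs_of_nonneg (by linarith)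
    rw [shift m (by rw [this]; linarith), this]; ring
  · obtain ⟨m, rfl⟩ := Int.not_even_iff_odd.1 he
    push_cast at *
    have : |r - (m + 1 : ℤ) * δ| = (m + 1) * δ - r := by
      rw [abs_of_nonpos] <;> push_cast <;> linarith
    rw [shift (m + 1) (by rw [this]; linarith), this]; ring

lemma abs_triangleWave_sub_eq {δ r s : ℝ} (hδ : 0 < δ) (h : Disjoint (uIcc r s) (corners δ)) :
    |triangleWave δ r - triangleWave δ s| = |r - s| := by
  wlog hrs : r ≤ s generalizing r s
  · rw [abs_sub_comm, this (by rwa [uIcc_comm]) (le_of_not_ge hrs), abs_sub_comm]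
  have hfl : ⌊r / (δ / 2)⌋ = ⌊s / (δ / 2)⌋ := by
    refine le_antisymm (Int.floor_mono (by gcongr)) (Int.le_floor.2 ?_)
    by_contra! hlt
    rw [div_lt_iff₀ (by positivity)] at hlt
    have h1 := Int.floor_le (s / (δ / 2))
    rw [le_div_iff₀ (by positivity)] at h1
    refine (h.notMem_of_mem_left (a := ⌊s / (δ / 2)⌋ * (δ / 2))) ?_ ⟨⌊s / (δ / 2)⌋, ?_⟩
    · rw [uIcc_of_le hrs]; exact ⟨hlt.le, h1⟩
    · field_simp
  rw [triangleWave_eq hδ rfl, triangleWave_eq hδ hfl.symm]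
  split_ifs
  · congr 1; ring
  · rw [abs_sub_comm]; congr 1; ring

/-! ### Measures attached to a curve -/

/-- Lebesgue measure on `[0, dist (γ s) (γ t)]`, transported to `[s, t]` by the map sending a level
`r` to the first time at which the distance from `γ s` equals `r`. This map is monotone, hence
measurable, and composing it with `γ` gives a section of `dist · (γ s)`; the latter is why the
image measure of a set is at most the length of its image under `dist · (γ s)`. -/
lemma exists_level_measure {M : Type*} [MetricSpace M] [MeasurableSpace M] [BorelSpace M]
    {γ : ℝ → M} (hγ : Continuous γ) {s t : ℝ} (hst : s ≤ t) :
    ∃ ν : Measure ℝ, IsFiniteMeasure ν ∧ ν (Icc s t)ᶜ = 0 ∧ ν univ = edist (γ t) (γ s) ∧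
      ∀ A : Set M, MeasurableSet A → ν.map γ A ≤ volume ((fun x => dist x (γ s)) '' A) := by
  set g : ℝ → ℝ := fun x => dist (γ x) (γ s) with hg
  have hgc : Continuous g := by fun_prop
  have hgs : g s = 0 := by simp [hg]
  have ex : ∀ r, ∃ x, r ∈ Icc 0 (g t) → IsLeast (Icc s t ∩ g ⁻¹' {r}) x := by
    intro r
    by_cases hr : r ∈ Icc 0 (g t)
    · have hc : IsCompact (Icc s t ∩ g ⁻¹' {r}) :=
        isCompact_Icc.inter_right (isClosed_singleton.preimage hgc)
      obtain ⟨x, hx, hxr⟩ := intermediate_value_Icc hst hgc.continuousOn (hgs.symm ▸ hr)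
      obtain ⟨y, hy⟩ := hc.exists_isLeast ⟨x, hx, hxr⟩
      exact ⟨y, fun _ => hy⟩
    · exact ⟨0, fun h => absurd h hr⟩
  choose σ hσ using ex
  have hmono : MonotoneOn σ (Icc 0 (g t)) := by
    intro r hr r' hr' hrr
    obtain ⟨⟨h1, h2⟩, h3⟩ := (hσ r' hr').1
    have : r ∈ Icc (g s) (g (σ r')) := by rw [hgs, h3]; exact ⟨hr.1, hrr⟩
    obtain ⟨x, hx, hxr⟩ := intermediate_value_Icc h1 hgc.continuousOn this
    exact ((hσ r hr).2 ⟨⟨hx.1, hx.2.trans h2⟩, hxr⟩).trans hx.2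
  have hm : AEMeasurable σ (volume.restrict (Icc 0 (g t))) :=
    aemeasurable_restrict_of_monotoneOn measurableSet_Icc hmono
  refine ⟨(volume.restrict (Icc 0 (g t))).map σ, inferInstance, ?_, ?_, ?_⟩
  · rw [Measure.map_apply_of_aemeasurable hm measurableSet_Icc.compl,
      Measure.restrict_apply' measurableSet_Icc]
    convert measure_empty (μ := (volume : Measure ℝ))
    ext r
    simp only [mem_inter_iff, mem_preimage, mem_empty_iff_false, iff_false, not_and]
    exact fun h hr => h (hσ r hr).1.1
  · rw [Measure.map_apply_of_aemeasurable hm MeasurableSet.univ, preimage_univ,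
      Measure.restrict_apply_univ, Real.volume_Icc, sub_zero, edist_dist]
  · intro A hA
    rw [Measure.map_apply hγ.measurable hA,
      Measure.map_apply_of_aemeasurable hm (hγ.measurable hA),
      Measure.restrict_apply' measurableSet_Icc]
    refine measure_mono fun r hr => ⟨γ (σ r), hr.1, (hσ r hr.2).1.2⟩

/-- Finitely many finite measures admit a measurable partition on whose `i`-th part the `i`-th
measure dominates all others: compare densities with respect to the sum, and resolve ties in favour
of the smallest index. -/
lemma exists_dominating_partition {X : Type*} [MeasurableSpace X] {n : ℕ}
    (μ : Fin n → Measure X) [∀ i, IsFiniteMeasure (μ i)] (hn : 0 < n) :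
    ∃ B : Fin n → Set X, (∀ i, MeasurableSet (B i)) ∧ Pairwise (fun i j => Disjoint (B i) (B j)) ∧
      (⋃ i, B i) = univ ∧ ∀ i j A, MeasurableSet A → A ⊆ B i → μ j A ≤ μ i A := by
  set m : Measure X := ∑ i, μ i with hm
  have hle : ∀ i, μ i ≤ m := fun i => by
    rw [hm]; exact Finset.single_le_sum (f := μ) (fun _ _ => Measure.zero_le _) (Finset.mem_univ i)
  set w : Fin n → X → ℝ≥0∞ := fun i => (μ i).rnDeriv m
  have hw : ∀ i, Measurable (w i) := fun i => Measure.measurable_rnDeriv _ _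
  have hd : ∀ i, m.withDensity (w i) = μ i := fun i =>
    Measure.withDensity_rnDeriv_eq _ _ (Measure.absolutelyContinuous_of_le (hle i))
  refine ⟨fun i => {x | (∀ j, w j x ≤ w i x) ∧ ∀ j, j < i → w j x < w i x}, ?_, ?_, ?_, ?_⟩
  · intro i
    have : {x | (∀ j, w j x ≤ w i x) ∧ ∀ j, j < i → w j x < w i x} =
        (⋂ j, {x | w j x ≤ w i x}) ∩ ⋂ j, ⋂ (_ : j < i), {x | w j x < w i x} := by
      ext; simp
    beta_reduce
    rw [this]
    exact (MeasurableSet.iInter fun j => measurableSet_le (hw j) (hw i)).inter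
      (MeasurableSet.iInter fun j => MeasurableSet.iInter fun _ => measurableSet_lt (hw j) (hw i))
  · intro i j hij
    refine disjoint_left.2 fun x hi hj => ?_
    rcases lt_or_gt_of_ne hij with h | h
    · exact (hi.1 j).not_gt (hj.2 i h)
    · exact (hj.1 i).not_gt (hi.2 j h)
  · refine eq_univ_of_forall fun x => mem_iUnion.2 ?_
    have : Nonempty (Fin n) := ⟨⟨0, hn⟩⟩
    obtain ⟨i₀, hi₀⟩ := Finite.exists_max (fun i => w i x)
    obtain ⟨i, hi, hmin⟩ := (toFinite {i | ∀ j, w j x ≤ w i x}).exists_minimal ⟨i₀, hi₀⟩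
    refine ⟨i, hi, fun j hj => lt_of_not_ge fun hge => ?_⟩
    exact hj.not_ge (hmin (fun k => (hi k).trans hge) hj.le)
  · intro i j A hA hAB
    rw [← hd i, ← hd j, withDensity_apply _ hA, withDensity_apply _ hA]
    exact setLIntegral_mono (hw i) fun x hx => (hAB hx).1 j

/-! ### Construction of the Lipschitz function -/

lemma exists_pos_le {ι : Type*} [Finite ι] (d : ι → ℝ) (hd : ∀ i, 0 < d i) :
    ∃ δ > 0, ∀ i, δ ≤ d i := by
  cases isEmpty_or_nonempty ι
  · exact ⟨1, one_pos, isEmptyElim⟩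
  · obtain ⟨i, hi⟩ := Finite.exists_min d
    exact ⟨d i, hd i, hi⟩

lemma exists_separation {M : Type*} [MetricSpace M] {ι : Type*} [Finite ι] {C : ι → Set M}
    (hC : ∀ i, IsCompact (C i)) (hd : Pairwise fun i j => Disjoint (C i) (C j)) :
    ∃ δ > 0, ∀ i j, i ≠ j → ∀ x ∈ C i, ∀ y ∈ C j, δ ≤ dist x y := by
  have : ∀ p : ι × ι, ∃ δ : ℝ, 0 < δ ∧ (p.1 ≠ p.2 → ∀ x ∈ C p.1, ∀ y ∈ C p.2, δ ≤ dist x y) := by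
    intro p
    by_cases hp : p.1 = p.2
    · exact ⟨1, one_pos, fun h => absurd hp h⟩
    · obtain ⟨r, hr, h⟩ := exists_pos_forall_lt_edist (hC p.1) (hC p.2).isClosed (hd hp)
      refine ⟨r, hr, fun _ x hx y hy => ?_⟩
      have := (h x hx y hy).le
      rw [edist_nndist, ENNReal.coe_le_coe] at this
      exact_mod_cast this
  choose d hd0 hd1 using this
  obtain ⟨δ, hδ, hle⟩ := exists_pos_le d hd0
  exact ⟨δ, hδ, fun i j hij x hx y hy => (hle (i, j)).trans (hd1 (i, j) hij x hx y hy)⟩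

/-- Suppose the compact sets `D i` have mutual distances at least `δ` and `h i` avoids the corners on
`D i`. Then the functions `triangleWave δ ∘ h i` on `D i` glue to a 1-Lipschitz function, since their
values lie in `[0, δ]`, and this function has locally the same increments as `h i` on `D i`, up to
sign. -/
lemma exists_lipschitz_locally_isometric {M : Type*} [MetricSpace M] {ι : Type*} [Finite ι]
    {D : ι → Set M} {h : ι → M → ℝ} {δ : ℝ} (hδ : 0 < δ) (hh : ∀ i, LipschitzWith 1 (h i))
    (hD : ∀ i, IsCompact (D i)) (hDc : ∀ i, Disjoint (h i '' D i) (corners δ))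
    (hsep : ∀ i j, i ≠ j → ∀ x ∈ D i, ∀ y ∈ D j, δ ≤ dist x y) :
    ∃ u : M → ℝ, LipschitzWith 1 u ∧ ∃ η > 0, ∀ i, ∀ x ∈ D i, ∀ y ∈ D i, dist x y < η →
      edist (h i x) (h i y) = edist (u x) (u y) := by
  classical
  have hpair : ∀ i j, ∀ x ∈ D i, x ∈ D j → i = j := fun i j x hi hj => by
    by_contra hij
    have := hsep i j hij x hi x hj
    rw [dist_self] at this
    exact this.not_gt hδ
  set v : M → ℝ := fun x =>
    if hx : ∃ i, x ∈ D i then triangleWave δ (h hx.choose x) else 0 with hv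
  have hvi : ∀ i, ∀ x ∈ D i, v x = triangleWave δ (h i x) := by
    intro i x hx
    have hex : ∃ i, x ∈ D i := ⟨i, hx⟩
    rw [hv]
    simp only [dif_pos hex]
    rw [hpair _ _ x hex.choose_spec hx]
  have hlip : LipschitzOnWith 1 v (⋃ i, D i) := by
    refine LipschitzOnWith.of_dist_le_mul fun x hx y hy => ?_
    obtain ⟨i, hi⟩ := mem_iUnion.1 hx
    obtain ⟨j, hj⟩ := mem_iUnion.1 hy
    rw [hvi i x hi, hvi j y hj, NNReal.coe_one, one_mul, Real.dist_eq]
    by_cases hij : i = j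
    · subst hij
      refine (abs_triangleWave_sub_le _ _ _).trans ?_
      simpa [Real.dist_eq] using (hh i).dist_le_mul x y
    · refine le_trans ?_ (hsep i j hij x hi y hj)
      have h1 := triangleWave_mem hδ (h i x)
      have h2 := triangleWave_mem hδ (h j y)
      rw [abs_le]
      constructor <;> linarith [h1.1, h1.2, h2.1, h2.2]
  obtain ⟨u, hu, huv⟩ := hlip.extend_real
  have hth : ∀ i, ∃ η, 0 < η ∧ thickening η (h i '' D i) ⊆ (corners δ)ᶜ := fun i =>
    ((hD i).image (hh i).continuous).exists_thickening_subset_open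
      (isClosed_corners δ).isOpen_compl (hDc i).subset_compl_right
  choose e he0 he using hth
  obtain ⟨η, hη, hle⟩ := exists_pos_le e he0
  refine ⟨u, hu, η, hη, fun i x hx y hy hxy => ?_⟩
  rw [← huv (mem_iUnion.2 ⟨i, hx⟩), ← huv (mem_iUnion.2 ⟨i, hy⟩), hvi i x hx, hvi i y hy,
    edist_dist, edist_dist, Real.dist_eq, Real.dist_eq, abs_triangleWave_sub_eq hδ]
  refine disjoint_compl_left.mono_left (subset_trans ?_ (he i))
  intro z hz
  refine mem_thickening_iff.2 ⟨h i x, mem_image_of_mem _ hx, ?_⟩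
  have h1 : |h i y - h i x| ≤ dist x y := by
    simpa [Real.dist_eq, abs_sub_comm] using (hh i).dist_le_mul x y
  rw [Real.dist_eq]
  exact (abs_sub_left_of_mem_uIcc hz).trans_lt (h1.trans_lt (hxy.trans_le (hle i)))

/-- One 1-Lipschitz function `u` nearly realizes the masses of all the measures `ν j` as lower bounds
for the variation of `u ∘ γ` on the respective intervals. -/
lemma exists_lipschitz_variation {M : Type*} [MetricSpace M] [MeasurableSpace M] [BorelSpace M]
    {γ : ℝ → M} (hγ : Continuous γ) {n : ℕ} {s t : Fin n → ℝ} (hst : ∀ j, s j ≤ t j)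
    {ν : Fin n → Measure ℝ} [∀ j, IsFiniteMeasure (ν j)] (hν : ∀ j, ν j (Icc (s j) (t j))ᶜ = 0)
    {h : Fin n → M → ℝ} (hh : ∀ j, LipschitzWith 1 (h j))
    (hνh : ∀ j A, MeasurableSet A → (ν j).map γ A ≤ volume (h j '' A))
    {a b : ℝ} (ha : ∀ j, a ≤ s j) (hb : ∀ j, t j ≤ b) {ε : ℝ≥0∞} (hε : ε ≠ 0) :
    ∃ u : M → ℝ, LipschitzWith 1 u ∧
      ∀ j, ν j univ ≤ eVariationOn (u ∘ γ) (Icc (s j) (t j)) + n * (ε + ε) := by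
  rcases Nat.eq_zero_or_pos n with rfl | hn
  · exact ⟨fun _ => 0, LipschitzWith.const' 0, fun j => j.elim0⟩
  set μ : Fin n → Measure M := fun j => (ν j).map γ with hμ
  have hμfin : ∀ j, IsFiniteMeasure (μ j) := fun j => by rw [hμ]; infer_instance
  obtain ⟨B, hBm, hBd, hBu, hBle⟩ := exists_dominating_partition μ hn
  set m : Measure M := ∑ j, μ j with hm
  have hle : ∀ i, μ i ≤ m := fun i => by
    rw [hm]; exact Finset.single_le_sum (f := μ) (fun _ _ => Measure.zero_le _) (Finset.mem_univ i)
  set K : Set M := γ '' Icc a b with hK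
  have hKc : IsCompact K := isCompact_Icc.image hγ
  have hmK : ∀ j, μ j Kᶜ = 0 := fun j => by
    rw [hμ]
    beta_reduce
    rw [Measure.map_apply hγ.measurable hKc.isClosed.measurableSet.compl]
    refine measure_mono_null (t := (Icc (s j) (t j))ᶜ) (fun x hx hx' => hx ?_) (hν j)
    exact ⟨x, ⟨(ha j).trans hx'.1, hx'.2.trans (hb j)⟩, rfl⟩
  have exF : ∀ i, ∃ F ⊆ B i, IsClosed F ∧ m (B i \ F) < ε := fun i =>
    (hBm i).exists_isClosed_sdiff_lt (measure_ne_top _ _) hε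
  choose F hFB hFc hFε using exF
  have hFKc : ∀ i, IsCompact (F i ∩ K) := fun i => hKc.inter_left (hFc i)
  obtain ⟨δ, hδ, hsep⟩ := exists_separation hFKc fun i j hij =>
    (hBd hij).mono (inter_subset_left.trans (hFB i)) (inter_subset_left.trans (hFB j))
  have hcm : ∀ i, MeasurableSet (h i ⁻¹' corners δ) := fun i =>
    ((isClosed_corners δ).preimage (hh i).continuous).measurableSet
  -- The period `δ` is now fixed; the sets are shrunk once more to stay away from its corners.
  have exD : ∀ i, ∃ D ⊆ (F i ∩ K) \ h i ⁻¹' corners δ, IsClosed D ∧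
      m (((F i ∩ K) \ h i ⁻¹' corners δ) \ D) < ε := fun i =>
    ((hFKc i).isClosed.measurableSet.diff (hcm i)).exists_isClosed_sdiff_lt
      (measure_ne_top _ _) hε
  choose D hDF hDc hDε using exD
  have hDF' : ∀ i, D i ⊆ F i ∩ K := fun i => (hDF i).trans sdiff_subset
  have hDcomp : ∀ i, IsCompact (D i) := fun i => (hFKc i).of_isClosed_subset (hDc i) (hDF' i)
  have hDsep : ∀ i j, i ≠ j → ∀ x ∈ D i, ∀ y ∈ D j, δ ≤ dist x y := fun i j hij x hx y hy =>
    hsep i j hij x (hDF' i hx) y (hDF' j hy)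
  obtain ⟨u, hu, η, hη, hiso⟩ := exists_lipschitz_locally_isometric hδ hh hDcomp
    (fun i => disjoint_left.2 (by rintro _ ⟨x, hx, rfl⟩ hc; exact (hDF i hx).2 hc)) hDsep
  refine ⟨u, hu, fun j => ?_⟩
  have hDm : MeasurableSet (⋃ i, D i) := MeasurableSet.iUnion fun i => (hDc i).measurableSet
  -- What is lost: the two inner approximations, and the corners, which are null for `μ i` and
  -- therefore, inside `B i`, for `μ j` as well.
  have hmass : μ j (⋃ i, D i)ᶜ ≤ n * (ε + ε) := by
    have hsub : (⋃ i, D i)ᶜ ⊆ (Kᶜ ∪ ⋃ i, (h i ⁻¹' corners δ ∩ B i)) ∪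
        ⋃ i, ((B i \ F i) ∪ (((F i ∩ K) \ h i ⁻¹' corners δ) \ D i)) := by
      intro x hx
      obtain ⟨i, hi⟩ := mem_iUnion.1 (hBu.symm ▸ mem_univ x : x ∈ ⋃ i, B i)
      have hxD : x ∉ D i := fun h => hx (mem_iUnion.2 ⟨i, h⟩)
      simp only [mem_union, mem_iUnion, mem_compl_iff, mem_inter_iff, mem_sdiff]
      by_cases h1 : x ∈ K
      · by_cases h2 : x ∈ h i ⁻¹' corners δ
        · exact Or.inl (Or.inr ⟨i, h2, hi⟩)
        · by_cases h3 : x ∈ F i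
          · exact Or.inr ⟨i, Or.inr ⟨⟨⟨h3, h1⟩, h2⟩, hxD⟩⟩
          · exact Or.inr ⟨i, Or.inl ⟨hi, h3⟩⟩
      · exact Or.inl (Or.inl h1)
    have hnull : μ j (Kᶜ ∪ ⋃ i, (h i ⁻¹' corners δ ∩ B i)) = 0 := by
      refine measure_union_null (hmK j) (measure_iUnion_null fun i => ?_)
      refine le_antisymm ((hBle i j _ ((hcm i).inter (hBm i)) inter_subset_right).trans ?_) zero_le
      refine (hνh i _ ((hcm i).inter (hBm i))).trans (le_of_eq ?_)
      refine measure_mono_null ?_ ((countable_corners hδ).measure_zero volume)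
      rintro _ ⟨x, hx, rfl⟩
      exact hx.1
    refine (measure_mono hsub).trans ((measure_union_le _ _).trans ?_)
    rw [hnull, zero_add]
    refine (measure_iUnion_le _).trans ?_
    rw [tsum_fintype]
    refine (Finset.sum_le_card_nsmul _ _ (ε + ε) fun i _ => ?_).trans (by simp [mul_add])
    refine (measure_union_le _ _).trans (add_le_add ?_ ?_)
    · exact ((hle j) _).trans (hFε i).le
    · exact ((hle j) _).trans (hDε i).le
  obtain ⟨κ, hκ, hγκ⟩ := Metric.uniformContinuousOn_iff.1
    ((isCompact_Icc (a := a) (b := b)).uniformContinuousOn_of_continuous hγ.continuousOn)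
    (min η δ) (lt_min hη hδ)
  have hloc : ((ν j).restrict (γ ⁻¹' ⋃ i, D i)) (Icc (s j) (t j)) ≤
      eVariationOn (u ∘ γ) (Icc (s j) (t j)) := by
    refine measure_le_eVariationOn_of_local hκ (hst j) fun x y hsx hxy hyt hlt => ?_
    rw [Measure.restrict_apply measurableSet_Icc]
    have hclose : ∀ p ∈ Icc x y, ∀ q ∈ Icc x y, dist (γ p) (γ q) < min η δ := by
      intro p hp q hq
      have := ha j
      have := hb j
      refine hγκ p ⟨by linarith [hp.1], by linarith [hp.2]⟩ q
        ⟨by linarith [hq.1], by linarith [hq.2]⟩ ?_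
      rw [Real.dist_eq]
      exact (abs_sub_le_of_le_of_le hp.1 hp.2 hq.1 hq.2).trans_lt hlt
    -- By the separation of the `D i`, the short arc `γ([x, y])` meets at most one of them.
    rcases (Icc x y ∩ γ ⁻¹' ⋃ i, D i).eq_empty_or_nonempty with he | ⟨p, hp, hpD⟩
    · rw [he, measure_empty]
      exact zero_le
    obtain ⟨i, hi⟩ := mem_iUnion.1 hpD
    set A : Set M := γ '' Icc x y ∩ D i with hA
    have hAm : MeasurableSet A :=
      ((isCompact_Icc.image hγ).isClosed.inter (hDc i)).measurableSet
    calc ν j (Icc x y ∩ γ ⁻¹' ⋃ i, D i) ≤ ν j (γ ⁻¹' A) := by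
          refine measure_mono fun q hq => ⟨mem_image_of_mem _ hq.1, ?_⟩
          obtain ⟨k, hk⟩ := mem_iUnion.1 hq.2
          by_cases hik : i = k
          · exact hik ▸ hk
          · exact absurd ((hclose p hp q hq.1).trans_le (min_le_right _ _))
              (hDsep i k hik _ hi _ hk).not_gt
      _ = μ j A := (Measure.map_apply hγ.measurable hAm).symm
      _ ≤ μ i A := hBle i j A hAm
          (inter_subset_right.trans ((hDF' i).trans (inter_subset_left.trans (hFB i))))
      _ ≤ volume (h i '' A) := hνh i A hAm
      _ ≤ ediam (h i '' A) := Real.volume_le_diam _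
      _ ≤ eVariationOn (u ∘ γ) (Icc x y) := by
          refine ediam_le ?_
          rintro _ ⟨_, ⟨⟨p, hp, rfl⟩, hpD⟩, rfl⟩ _ ⟨_, ⟨⟨q, hq, rfl⟩, hqD⟩, rfl⟩
          rw [hiso i _ hpD _ hqD ((hclose p hp q hq).trans_le (min_le_left _ _))]
          exact eVariationOn.edist_le (u ∘ γ) hp hq
  calc ν j univ = μ j univ := by
        rw [hμ]; exact (Measure.map_apply hγ.measurable MeasurableSet.univ).symm
    _ = μ j (⋃ i, D i) + μ j (⋃ i, D i)ᶜ := (measure_add_measure_compl hDm).symm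
    _ ≤ _ := by
      refine add_le_add (le_trans ?_ hloc) hmass
      rw [hμ, Measure.restrict_apply measurableSet_Icc]
      beta_reduce
      rw [Measure.map_apply hγ.measurable hDm, inter_comm]
      exact (measure_inter_conull (hν j)).ge

lemma eVariationOn_le_of_forall_lipschitz {M : Type*} [MetricSpace M] {γ : ℝ → M} (hγ : Continuous γ) {a b : ℝ}
    {c : ℝ≥0∞} (hc : ∀ u : M → ℝ, LipschitzWith 1 u → eVariationOn (u ∘ γ) (Icc a b) ≤ c) :
    eVariationOn γ (Icc a b) ≤ c := by
  borelize M
  refine iSup_le ?_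
  rintro ⟨n, I, hI, hmem⟩
  choose ν hfin hsupp huniv hvol using fun j : Fin n =>
    exists_level_measure hγ (hI (Nat.le_succ (j : ℕ)))
  refine ENNReal.le_of_forall_pos_le_add fun ε hε _ => ?_
  set N : ℝ≥0∞ := n * (n * 2) with hN
  have hNtop : N ≠ ⊤ := by rw [hN]; finiteness
  obtain ⟨u, hu, hle⟩ := exists_lipschitz_variation hγ (fun j : Fin n => hI (Nat.le_succ (j : ℕ)))
    hsupp (h := fun j x => dist x (γ (I j))) (fun j => LipschitzWith.dist_left _) hvol
    (fun j => (hmem _).1) (fun j => (hmem _).2) (ε := ε / (N + 1))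
    (ENNReal.div_ne_zero.2 ⟨by exact_mod_cast hε.ne', by finiteness⟩)
  dsimp only
  rw [Finset.sum_range]
  calc ∑ j : Fin n, edist (γ (I (j + 1))) (γ (I j)) = ∑ j, ν j univ := by simp only [huniv]
    _ ≤ ∑ j : Fin n, (eVariationOn (u ∘ γ) (Icc (I j) (I (j + 1))) +
        n * (ε / (N + 1) + ε / (N + 1))) := Finset.sum_le_sum fun j _ => hle j
    _ = eVariationOn (u ∘ γ) (Icc (I 0) (I n)) + N * (ε / (N + 1)) := by
        rw [Finset.sum_add_distrib, ← eVariationOn.sum' _ hI, Finset.sum_range]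
        congr 1
        rw [hN]
        simp
        ring
    _ ≤ c + ε := by
        refine add_le_add ((eVariationOn.mono _ ?_).trans (hc u hu)) ?_
        · exact Icc_subset_Icc (hmem _).1 (hmem _).2
        · calc N * (ε / (N + 1)) ≤ (N + 1) * (ε / (N + 1)) := by gcongr; exact le_self_add
            _ ≤ ε := ENNReal.mul_div_le

/-- If `γ : [a,b] → M` is continuous, then `Var γ = LVar γ`. -/
theorem var_eq_lvar_of_continuous {M : Type*} [MetricSpace M] (a b : ℝ) (hab : a < b)
    (γ : ℝ → M) (hγ : ContinuousOn γ (Set.Icc a b)) :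
    Var a b γ = LVar a b γ := by
  refine le_antisymm ?_ (iSup_le fun f => ?_)
  · -- Only the values of `γ` on `[a, b]` matter, so `γ` may be replaced by its constant extension.
    set g : ℝ → M := IccExtend hab.le ((Icc a b).domRestrict γ) with hg
    have hgc : Continuous g := (continuousOn_iff_continuous_domRestrict.1 hγ).Icc_extend'
    have hgγ : EqOn γ g (Icc a b) := fun x hx => by
      rw [hg, IccExtend_of_mem hab.le _ hx, domRestrict_apply]
    rw [Var, eVariationOn.eq_of_eqOn hgγ]
    refine eVariationOn_le_of_forall_lipschitz hgc fun u hu => ?_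
    rw [← eVariationOn.eq_of_eqOn (hgγ.comp_left (g := u))]
    exact le_iSup (fun f : {f : M → ℝ // LipschitzWith 1 f} => Var a b (f.1 ∘ γ)) ⟨u, hu⟩
  · simpa [Var] using (f.2.lipschitzOnWith (s := univ)).comp_eVariationOn_le
      (f := f.1) (g := γ) (s := Icc a b) (mapsTo_univ _ _)
end

section
/- There exists a universal constant C > 0 such that for every integer d ≥ 2 there is a map γ : [0,1] → ℝ^d (with the Euclidean norm) satisfying 0 < Var_γ < ∞ and LVar_γ ≤ C · d^{-1/2} (log d)^{1/2} · Var_γ. In particular, LCJ(ℝ^d) ≤ C d^{-1/2}(log d)^{1/2}. -/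
/-!
The path is a step function: it jumps between finitely many points, so its variation is a sum of
distances between consecutive points, and it suffices to find a long finite walk along which no
`1`-Lipschitz function varies much. The jumps of the walk imitate a pair `(X, Y)` of independent
standard Gaussian vectors in `ℝ^d`.

* Length: `E ‖X - Y‖ ≥ E ‖X‖ ≥ c √d` with `c` the first absolute moment of a standard normal variable
  (`le_integral_dist`).
* Concentration: `E |f X - f Y| ≤ π / 2` for every `1`-Lipschitz `f` (`integral_lip_le`). Turn `X`
  into `Y` by `n` rotations of angle `π / (2n)`. The law of `(X, Y)` is rotation invariant, so all
  increments of `f` have the same law; letting `n → ∞` and using Rademacher's theorem, the sum of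
  their absolute means tends to `(π / 2) E |f'(X) Y|`, and `f'(x) Y` is a centred Gaussian of
  variance at most one.

Both bounds survive an `L¹`-small perturbation of `(X, Y)`, uniformly in `f`, so `(X, Y)` may be
replaced by a finitely supported pair (`exists_simple`). A walk that shuttles along each edge
`(u, v)` of its support a number of times proportional to the weight of that edge reproduces both
expectations, since the cost of rounding and of changing edges does not grow with the number of
repetitions (`exists_list_of_edges`, `exists_walk`). The resulting ratio is `O(d ^ (-1/2))`, which is
stronger than the claim because `log d ≥ log 2`.
-/

open Set ENNReal

open MeasureTheory ProbabilityTheory Filter Topology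

/-! ### Step paths through a finite list of points -/

/-- The sum of `ρ` over consecutive pairs of a list; for `ρ = dist` this is the length of the
discrete walk visiting the points of the list in order. -/
def walkSum {E : Type*} (ρ : E → E → ℝ) : List E → ℝ
  | [] => 0
  | [_] => 0
  | a :: b :: l => ρ a b + walkSum ρ (b :: l)

lemma sum_getD_eq_walkSum {E : Type*} (ρ : E → E → ℝ) (e a : E) (l : List E) :
    ∑ k ∈ Finset.range l.length, ρ ((a :: l).getD k e) ((a :: l).getD (k + 1) e)
      = walkSum ρ (a :: l) := by
  induction l generalizing a with
  | nil => simp [walkSum]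
  | cons b l ih =>
    rw [List.length_cons, Finset.sum_range_succ', walkSum, ← ih b, add_comm]
    simp

/-- Every finite list is traversed by a step function on `[0,1]`, and the variation of any image
of that step function is the corresponding sum over consecutive points. -/
lemma exists_path_of_list {E : Type} [Zero E] (l : List E) :
    ∃ γ : ℝ → E, ∀ (F : Type) [PseudoMetricSpace F] (g : E → F),
      Var 0 1 (g ∘ γ) = ENNReal.ofReal (walkSum (fun x y => dist (g x) (g y)) l) := by
  set n := l.length - 1 with hn
  let x : ℕ → E := fun k => l.getD k 0
  let φ : ℝ → ℕ := fun t => ⌊(n : ℝ) * t⌋₊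
  refine ⟨x ∘ φ, fun F _ g => ?_⟩
  have hφ : MonotoneOn φ (Icc 0 1) := fun s _ t _ hst =>
    Nat.floor_mono (mul_le_mul_of_nonneg_left hst (Nat.cast_nonneg n))
  have himg : φ '' Icc 0 1 = id '' Iic n := by
    ext k
    simp only [mem_image, mem_Icc, mem_Iic, id, exists_eq_right]
    constructor
    · rintro ⟨t, ⟨_, h1⟩, rfl⟩
      refine Nat.floor_le_of_le ?_
      exact mul_le_of_le_one_right (Nat.cast_nonneg n) h1
    · intro hk
      have hk' : (k : ℝ) ≤ n := by exact_mod_cast hk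
      refine ⟨k / n, ⟨by positivity, div_le_one_of_le₀ hk' (Nat.cast_nonneg n)⟩, ?_⟩
      rcases Nat.eq_zero_or_pos n with h0 | h0
      · have : k = 0 := by omega
        simp [φ, this]
      · have : (n : ℝ) ≠ 0 := by positivity
        simp [φ, mul_div_cancel₀ _ this]
  have h1 : Var 0 1 (g ∘ x ∘ φ) = eVariationOn (g ∘ x) (φ '' Icc 0 1) :=
    eVariationOn.comp_eq_of_monotoneOn (g ∘ x) φ hφ
  rw [h1, himg, eVariationOn.image_range_of_monotone _ monotone_id]
  have h2 : ∑ k ∈ Finset.range n, dist (g (l.getD k 0)) (g (l.getD (k + 1) 0))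
      = walkSum (fun x y => dist (g x) (g y)) l := by
    cases l with
    | nil => simp [hn, walkSum]
    | cons a l => exact sum_getD_eq_walkSum (fun x y => dist (g x) (g y)) 0 a l
  rw [← h2, ENNReal.ofReal_sum_of_nonneg (fun _ _ => dist_nonneg)]
  simp [edist_dist, x]

/-- Prefix a list by `n` runs `u, v`. -/
def shuttle {E : Type*} (u v : E) (l : List E) : ℕ → List E
  | 0 => l
  | n + 1 => u :: v :: shuttle u v l n

/-- A single list that goes back and forth along each edge `e` of a finite set about `n e` times.
The lower and upper counts differ by a factor two, and moving between different edges costs at most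
`D` each. -/
lemma exists_list_of_edges {E : Type*} (T : Set E) (D : ℝ) (hD : 0 ≤ D) (n : E × E → ℕ)
    (s : Finset (E × E)) (hs : ∀ p ∈ s, p.1 ∈ T ∧ p.2 ∈ T) :
    ∃ l : List E, (∀ x ∈ l, x ∈ T) ∧ ∀ ρ : E → E → ℝ, (∀ x y, 0 ≤ ρ x y) →
      (∀ x y, ρ x y = ρ y x) → (∀ x ∈ T, ∀ y ∈ T, ρ x y ≤ D) →
      ∑ p ∈ s, n p * ρ p.1 p.2 ≤ walkSum ρ l ∧
      walkSum ρ l ≤ 2 * ∑ p ∈ s, n p * ρ p.1 p.2 + s.card * D := by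
  classical
  induction s using Finset.induction_on with
  | empty => exact ⟨[], by simp, fun ρ _ _ _ => by simp [walkSum]⟩
  | insert p s hp ih =>
    obtain ⟨l, hl, H⟩ := ih fun q hq => hs q (Finset.mem_insert_of_mem hq)
    obtain ⟨hu, hv⟩ := hs p (Finset.mem_insert_self p s)
    refine ⟨shuttle p.1 p.2 l (n p), ?_, fun ρ h0 hsymm hb => ?_⟩
    · induction n p with
      | zero => exact hl
      | succ k ih => simpa [shuttle, hu, hv] using ih
    · obtain ⟨Hl, Hu⟩ := H ρ h0 hsymm hb
      have key : ∀ k : ℕ, k * ρ p.1 p.2 + walkSum ρ l ≤ walkSum ρ (shuttle p.1 p.2 l k) ∧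
          walkSum ρ (shuttle p.1 p.2 l k) ≤ 2 * (k * ρ p.1 p.2) + walkSum ρ l + D := by
        intro k
        induction k with
        | zero => simp [shuttle, hD]
        | succ k ih =>
          rcases k with _ | k
          · cases l with
            | nil =>
              have := h0 p.1 p.2
              simp only [shuttle, walkSum]
              push_cast
              constructor <;> linarith
            | cons a l =>
              have h1 := h0 p.1 p.2
              have h2 := h0 p.2 a
              have h3 := hb p.2 hv a (hl a (by simp))
              simp only [shuttle, walkSum]
              push_cast
              constructor <;> linarith
          · have h1 := h0 p.1 p.2
            have h2 := hsymm p.1 p.2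
            obtain ⟨i1, i2⟩ := ih
            have e : walkSum ρ (shuttle p.1 p.2 l (k + 1 + 1)) = ρ p.1 p.2 +
                (ρ p.2 p.1 + walkSum ρ (shuttle p.1 p.2 l (k + 1))) := by
              simp only [shuttle, walkSum]
            rw [e]
            push_cast at i1 i2 ⊢
            constructor <;> linarith
      obtain ⟨k1, k2⟩ := key (n p)
      rw [Finset.sum_insert hp, Finset.card_insert_of_notMem hp]
      push_cast
      constructor <;> linarith

/-! ### Gaussian concentration for Lipschitz functions -/

lemma pi_gaussian_ac (n : ℕ) :
    Measure.pi (fun _ : Fin n => gaussianReal 0 1) ≪ (volume : Measure (Fin n → ℝ)) := by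
  induction n with
  | zero =>
    rw [volume_pi, Measure.pi_of_empty _ 0, Measure.pi_of_empty _ 0]
  | succ n ih =>
    have h1 := (measurePreserving_piFinSuccAbove (fun _ : Fin (n + 1) => gaussianReal 0 1) 0).symm
    have h2 := (volume_preserving_piFinSuccAbove (fun _ : Fin (n + 1) => ℝ) 0).symm
    rw [← h1.map_eq, ← h2.map_eq]
    refine Measure.AbsolutelyContinuous.map ?_ (MeasurableEquiv.measurable _)
    exact (gaussianReal_absolutelyContinuous 0 one_ne_zero).prod ih

lemma stdGaussian_ac (d : ℕ) :
    stdGaussian (EuclideanSpace ℝ (Fin d)) ≪ volume := by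
  rw [← map_pi_eq_stdGaussian, ← (PiLp.volume_preserving_toLp (Fin d)).map_eq]
  exact (pi_gaussian_ac d).map (PiLp.volume_preserving_toLp (Fin d)).measurable

section Concentration

variable {d : ℕ}

local notation "𝔼" => EuclideanSpace ℝ (Fin d)

lemma integral_abs_dual_le (L : StrongDual ℝ 𝔼) (hL : ‖L‖ ≤ 1) :
    ∫ y, |L y| ∂(stdGaussian 𝔼) ≤ 1 := by
  have hm : MemLp L 2 (stdGaussian 𝔼) := IsGaussian.memLp_dual _ L 2 (by simp)
  have h2 : ∫ y, (L y) ^ 2 ∂(stdGaussian 𝔼) = ‖L‖ ^ 2 := by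
    rw [← variance_dual_stdGaussian L, variance_of_integral_eq_zero hm.aemeasurable
      (integral_strongDual_stdGaussian L)]
  calc ∫ y, |L y| ∂(stdGaussian 𝔼)
      ≤ ∫ y, (1 + (L y) ^ 2) / 2 ∂(stdGaussian 𝔼) := by
        refine integral_mono (hm.integrable (by norm_num)).abs
          (((integrable_const 1).add hm.integrable_sq).div_const 2) fun y => ?_
        have := sq_nonneg (|L y| - 1)
        have := sq_abs (L y)
        simp only
        nlinarith
    _ = (1 + ‖L‖ ^ 2) / 2 := by
        rw [integral_div, integral_add (integrable_const 1) hm.integrable_sq, h2]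
        simp
    _ ≤ 1 := by nlinarith [norm_nonneg L]

lemma integrable_fst_snd : Integrable (fun z : 𝔼 × 𝔼 => ‖z.1‖ + ‖z.2‖)
    ((stdGaussian 𝔼).prod (stdGaussian 𝔼)) := by
  have h : Integrable (fun x : 𝔼 => ‖x‖) (stdGaussian 𝔼) := IsGaussian.integrable_id.norm
  exact (h.comp_fst _).add (h.comp_snd _)

lemma integrable_lip_sub {f : 𝔼 → ℝ} (hf : LipschitzWith 1 f) {u v : 𝔼 × 𝔼 → 𝔼} {c : ℝ}
    (hu : Continuous u) (hv : Continuous v) (h : ∀ z, dist (u z) (v z) ≤ c * (‖z.1‖ + ‖z.2‖)) :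
    Integrable (fun z => |f (u z) - f (v z)|) ((stdGaussian 𝔼).prod (stdGaussian 𝔼)) := by
  refine (integrable_fst_snd.const_mul c).mono' ?_ (Eventually.of_forall fun z => ?_)
  · have := hf.continuous
    exact Continuous.aestronglyMeasurable (by fun_prop)
  · rw [Real.norm_eq_abs, abs_abs, ← Real.dist_eq]
    exact ((hf.dist_le_mul _ _).trans (by simp)).trans (h z)

lemma dist_rot_le (α : ℝ) (hα : 0 ≤ α) (z : 𝔼 × 𝔼) :
    dist (Real.cos α • z.1 + Real.sin α • z.2) z.1 ≤ α * (‖z.1‖ + ‖z.2‖) := by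
  have h1 : |Real.cos α - 1| ≤ α := by
    have := Real.abs_cos_sub_cos_le α 0
    simpa [abs_of_nonneg hα] using this
  have h2 : |Real.sin α| ≤ α := by
    simpa [abs_of_nonneg hα] using Real.abs_sin_le_abs (x := α)
  rw [dist_eq_norm, show Real.cos α • z.1 + Real.sin α • z.2 - z.1
    = (Real.cos α - 1) • z.1 + Real.sin α • z.2 by rw [sub_smul, one_smul]; abel]
  refine (norm_add_le _ _).trans ?_
  rw [norm_smul, norm_smul, Real.norm_eq_abs, Real.norm_eq_abs, mul_add]
  gcongr

/-- Splitting the quarter turn from `x` to `y` into `n` small rotations, each of which has the same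
law as the first one. -/
lemma integral_lip_le_rot {f : 𝔼 → ℝ} (hf : LipschitzWith 1 f) (n : ℕ) (hn : 0 < n) :
    ∫ z, |f z.1 - f z.2| ∂((stdGaussian 𝔼).prod (stdGaussian 𝔼)) ≤
    ∫ z, n * |f (Real.cos (Real.pi / (2 * n)) • z.1 + Real.sin (Real.pi / (2 * n)) • z.2) - f z.1|
      ∂((stdGaussian 𝔼).prod (stdGaussian 𝔼)) := by
  set ν := (stdGaussian 𝔼).prod (stdGaussian 𝔼)
  set α := Real.pi / (2 * n) with hα
  have hn' : (n : ℝ) ≠ 0 := by positivity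
  have hα0 : 0 ≤ α := by positivity
  let R : ℝ → 𝔼 × 𝔼 →L[ℝ] 𝔼 × 𝔼 := fun θ => ContinuousLinearMap.rotation θ
  have hR : ∀ θ, MeasurePreserving (R θ) ν ν := fun θ =>
    ⟨(R θ).continuous.measurable, IsGaussian.map_rotation_eq_self (by simp) θ⟩
  let G : 𝔼 × 𝔼 → ℝ := fun z => |f (Real.cos α • z.1 + Real.sin α • z.2) - f z.1|
  have hG : Integrable G ν :=
    integrable_lip_sub hf (by fun_prop) (by fun_prop) fun z => dist_rot_le α hα0 z
  let g : ℕ → 𝔼 × 𝔼 → ℝ := fun k z => f (R (k * α) z).1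
  have hstep : ∀ k z, |g (k + 1) z - g k z| = G (R (k * α) z) := by
    intro k z
    simp only [g, G, R, ContinuousLinearMap.rotation_apply]
    congr 3
    have : ((k + 1 : ℕ) : ℝ) * α = α + k * α := by push_cast; ring
    rw [this, Real.cos_add, Real.sin_add]
    module
  have h0 : ∀ z, g 0 z = f z.1 := fun z => by
    simp [g, R, ContinuousLinearMap.rotation_apply]
  have hnn : ∀ z, g n z = f z.2 := fun z => by
    have : (n : ℝ) * α = Real.pi / 2 := by rw [hα]; field_simp
    simp [g, R, ContinuousLinearMap.rotation_apply, this]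
  have hGk : ∀ k : ℕ, Integrable (fun z => G (R (k * α) z)) ν := fun k =>
    (hR _).integrable_comp_of_integrable hG
  have hGi : ∀ k : ℕ, ∫ z, G (R (k * α) z) ∂ν = ∫ z, G z ∂ν := fun k => by
    have h := integral_map (μ := ν) (hR (k * α)).measurable.aemeasurable (f := G)
      (by rw [(hR (k * α)).map_eq]; exact hG.aestronglyMeasurable)
    rw [(hR (k * α)).map_eq] at h
    exact h.symm
  calc ∫ z, |f z.1 - f z.2| ∂ν
      ≤ ∫ z, ∑ k ∈ Finset.range n, G (R (k * α) z) ∂ν := by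
        refine integral_mono ?_ (integrable_finsetSum _ fun k _ => hGk k) fun z => ?_
        · refine integrable_lip_sub (c := 1) hf continuous_fst continuous_snd fun z => ?_
          rw [one_mul]
          exact dist_le_norm_add_norm _ _
        · simp only
          rw [abs_sub_comm, ← h0, ← hnn, ← Finset.sum_range_sub (fun k => g k z)]
          refine (Finset.abs_sum_le_sum_abs _ _).trans (le_of_eq ?_)
          exact Finset.sum_congr rfl fun k _ => hstep k z
    _ = n * ∫ z, G z ∂ν := by
        rw [integral_finsetSum _ fun k _ => hGk k]
        simp [hGi]
    _ = _ := by rw [integral_const_mul]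

/-- Gaussian concentration in `L¹`: a `1`-Lipschitz function oscillates by `O(1)`, independently of
the dimension. As the rotation angle tends to zero, the increments in `integral_lip_le_rot` converge
to the derivative of `f` in a Gaussian direction, which exists almost everywhere by Rademacher's
theorem. -/
lemma integral_lip_le {f : 𝔼 → ℝ} (hf : LipschitzWith 1 f) :
    ∫ z, |f z.1 - f z.2| ∂((stdGaussian 𝔼).prod (stdGaussian 𝔼)) ≤ Real.pi / 2 := by
  set ν := (stdGaussian 𝔼).prod (stdGaussian 𝔼) with hν
  have hdiff : ∀ᵐ z ∂ν, DifferentiableAt ℝ f z.1 := by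
    have h1 : ∀ᵐ x ∂(stdGaussian 𝔼), DifferentiableAt ℝ f x :=
      (stdGaussian_ac d).ae_le (hf.ae_differentiableAt (μ := volume))
    exact Measure.quasiMeasurePreserving_fst.ae h1
  let F : ℕ → 𝔼 × 𝔼 → ℝ := fun n z => n *
    |f (Real.cos (Real.pi / (2 * n)) • z.1 + Real.sin (Real.pi / (2 * n)) • z.2) - f z.1|
  let G : 𝔼 × 𝔼 → ℝ := fun z => Real.pi / 2 * |fderiv ℝ f z.1 z.2|
  have hFm : ∀ n, AEStronglyMeasurable (F n) ν := fun n => by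
    have := hf.continuous
    exact Continuous.aestronglyMeasurable (by fun_prop)
  have hlim : ∀ᵐ z ∂ν, Tendsto (fun n => F n z) atTop (𝓝 (G z)) := by
    filter_upwards [hdiff] with z hz
    have hc : HasDerivAt (fun t : ℝ => Real.cos t • z.1 + Real.sin t • z.2) z.2 0 := by
      have := ((Real.hasDerivAt_cos 0).smul_const z.1).add
        ((Real.hasDerivAt_sin 0).smul_const z.2)
      rw [Real.sin_zero, Real.cos_zero, neg_zero, zero_smul, one_smul, zero_add] at this
      exact this
    have hz' : HasFDerivAt f (fderiv ℝ f z.1)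
        ((fun t : ℝ => Real.cos t • z.1 + Real.sin t • z.2) 0) := by
      simpa using hz.hasFDerivAt
    have hs := (hz'.comp_hasDerivAt (0 : ℝ) hc).tendsto_slope
    have hα : Tendsto (fun n : ℕ => Real.pi / (2 * (n : ℝ))) atTop (𝓝[≠] 0) := by
      refine tendsto_nhdsWithin_iff.2 ⟨?_, ?_⟩
      · refine Tendsto.div_atTop tendsto_const_nhds ?_
        exact tendsto_natCast_atTop_atTop.const_mul_atTop two_pos
      · filter_upwards [eventually_gt_atTop 0] with n hn
        have : 0 < Real.pi / (2 * (n : ℝ)) := by positivity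
        exact this.ne'
    have h := ((hs.comp hα).abs).const_mul (Real.pi / 2)
    refine h.congr' ?_
    filter_upwards [eventually_gt_atTop 0] with n hn
    have hn' : (0 : ℝ) < n := by exact_mod_cast hn
    have hp : 0 < Real.pi / (2 * (n : ℝ)) := by positivity
    simp only [Function.comp, slope_def_field, F, sub_zero, Real.cos_zero, Real.sin_zero, one_smul,
      zero_smul, add_zero, abs_div, abs_of_pos hp]
    field_simp
  have hbound : ∀ n, ∀ᵐ z ∂ν, ‖F n z‖ ≤ Real.pi / 2 * (‖z.1‖ + ‖z.2‖) := fun n =>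
    Eventually.of_forall fun z => by
      have hα0 : 0 ≤ Real.pi / (2 * (n : ℝ)) := by positivity
      have h1 := (hf.dist_le_mul (Real.cos (Real.pi / (2 * n)) • z.1 +
        Real.sin (Real.pi / (2 * n)) • z.2) z.1).trans
        (by simpa using dist_rot_le _ hα0 z)
      rw [Real.dist_eq] at h1
      have h2 : ‖F n z‖ = F n z := by
        rw [Real.norm_eq_abs]; exact abs_of_nonneg (by positivity)
      rw [h2]
      rcases Nat.eq_zero_or_pos n with h0 | h0
      · simp only [F, h0]
        simp only [Nat.cast_zero, zero_mul]
        positivity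
      · calc F n z ≤ n * (Real.pi / (2 * n) * (‖z.1‖ + ‖z.2‖)) := by
              simp only [F]; gcongr
          _ = _ := by
              have : (n : ℝ) ≠ 0 := by positivity
              field_simp
  have hGint : Integrable G ν := by
    refine (integrable_fst_snd.const_mul (Real.pi / 2)).mono'
      (aestronglyMeasurable_of_tendsto_ae _ hFm hlim) ?_
    filter_upwards [hlim, ae_all_iff.2 hbound] with z hz hb
    exact le_of_tendsto hz.norm (Eventually.of_forall hb)
  have hT : Tendsto (fun n => ∫ z, F n z ∂ν) atTop (𝓝 (∫ z, G z ∂ν)) :=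
    tendsto_integral_of_dominated_convergence _ hFm (integrable_fst_snd.const_mul _) hbound hlim
  have hle : ∫ z, |f z.1 - f z.2| ∂ν ≤ ∫ z, G z ∂ν := by
    refine ge_of_tendsto hT ?_
    filter_upwards [eventually_gt_atTop 0] with n hn
    exact integral_lip_le_rot hf n hn
  refine hle.trans ?_
  rw [hν, integral_prod G hGint]
  have hin : ∀ x : 𝔼, ∫ y, G (x, y) ∂(stdGaussian 𝔼) ≤ Real.pi / 2 := fun x => by
    simp only [G]
    rw [integral_const_mul]
    have := integral_abs_dual_le (fderiv ℝ f x)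
      (by simpa using norm_fderiv_le_of_lipschitz ℝ hf (x₀ := x))
    exact mul_le_of_le_one_right (by positivity) this
  calc ∫ x, ∫ y, G (x, y) ∂(stdGaussian 𝔼) ∂(stdGaussian 𝔼)
      ≤ ∫ _, Real.pi / 2 ∂(stdGaussian 𝔼) :=
        integral_mono hGint.integral_prod_left (integrable_const _) hin
    _ = Real.pi / 2 := by simp

/-- The first absolute moment of the standard Gaussian on the line. -/
noncomputable def gaussAbs : ℝ := ∫ t, |t| ∂(gaussianReal 0 1)

lemma gaussAbs_pos : 0 < gaussAbs := by
  have hi : Integrable (fun t : ℝ => |t|) (gaussianReal 0 1) :=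
    (IsGaussian.integrable_id (μ := gaussianReal 0 1)).abs
  rw [gaussAbs, integral_pos_iff_support_of_nonneg (fun _ => abs_nonneg _) hi]
  have : Function.support (fun t : ℝ => |t|) = {0}ᶜ := by ext; simp
  have := nullSingletonClass_gaussianReal (μ := 0) (v := 1) one_ne_zero
  simp_all [prob_compl_eq_one_sub]

lemma le_integral_dist :
    gaussAbs * Real.sqrt d ≤
      ∫ z, dist z.1 z.2 ∂((stdGaussian 𝔼).prod (stdGaussian 𝔼)) := by
  have hid : Integrable (fun x : 𝔼 => x) (stdGaussian 𝔼) := IsGaussian.integrable_id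
  have hdist : Integrable (fun z : 𝔼 × 𝔼 => dist z.1 z.2)
      ((stdGaussian 𝔼).prod (stdGaussian 𝔼)) := by
    refine integrable_fst_snd.mono' (Continuous.aestronglyMeasurable (by fun_prop))
      (Eventually.of_forall fun z => ?_)
    simpa using dist_le_norm_add_norm z.1 z.2
  have h1 : ∫ x, ‖x‖ ∂(stdGaussian 𝔼) ≤
      ∫ z, dist z.1 z.2 ∂((stdGaussian 𝔼).prod (stdGaussian 𝔼)) := by
    rw [integral_prod _ hdist]
    refine integral_mono hid.norm hdist.integral_prod_left fun x => ?_
    -- Jensen: the Gaussian is centred, so `x` is the mean of `x - y`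
    have : ∫ y, (x - y) ∂(stdGaussian 𝔼) = x := by
      rw [integral_sub (integrable_const x) hid]; simp
    calc ‖x‖ = ‖∫ y, (x - y) ∂(stdGaussian 𝔼)‖ := by rw [this]
      _ ≤ ∫ y, ‖x - y‖ ∂(stdGaussian 𝔼) := norm_integral_le_integral_norm _
      _ = _ := by simp [dist_eq_norm]
  refine le_trans ?_ h1
  have hcoord : ∀ i : Fin d, ∫ x, |x i| ∂(stdGaussian 𝔼) = gaussAbs := fun i => by
    rw [← map_pi_eq_stdGaussian, integral_map (by fun_prop)
      (Continuous.aestronglyMeasurable (by fun_prop))]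
    exact integral_comp_eval (μ := fun _ : Fin d => gaussianReal 0 1) (i := i)
      (f := fun t : ℝ => |t|) (Continuous.aestronglyMeasurable (by fun_prop))
  have hcint : ∀ i : Fin d, Integrable (fun x : 𝔼 => |x i|) (stdGaussian 𝔼) := fun i => by
    refine hid.norm.mono' (Continuous.aestronglyMeasurable (by fun_prop))
      (Eventually.of_forall fun x => ?_)
    simpa using PiLp.norm_apply_le x i
  have hl1 : ∀ x : 𝔼, ∑ i, |x i| ≤ Real.sqrt d * ‖x‖ := fun x => by
    refine abs_le_of_sq_le_sq' ?_ (by positivity) |>.2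
    rw [mul_pow, Real.sq_sqrt (Nat.cast_nonneg d), EuclideanSpace.norm_sq_eq]
    simpa using sq_sum_le_card_mul_sum_sq (s := Finset.univ) (f := fun i => |x i|)
  have h2 : d * gaussAbs ≤ Real.sqrt d * ∫ x, ‖x‖ ∂(stdGaussian 𝔼) := by
    calc d * gaussAbs = ∫ x, ∑ i, |x i| ∂(stdGaussian 𝔼) := by
          rw [integral_finsetSum _ fun i _ => hcint i]
          simp [hcoord]
      _ ≤ ∫ x, Real.sqrt d * ‖x‖ ∂(stdGaussian 𝔼) :=
          integral_mono (integrable_finsetSum _ fun i _ => hcint i) (hid.norm.const_mul _) hl1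
      _ = _ := integral_const_mul _ _
  rcases Nat.eq_zero_or_pos d with h0 | h0
  · subst h0
    simpa using integral_nonneg fun _ => norm_nonneg _
  · have hs : 0 < Real.sqrt d := Real.sqrt_pos.2 (by exact_mod_cast h0)
    have hss : Real.sqrt d * Real.sqrt d = d := Real.mul_self_sqrt (Nat.cast_nonneg d)
    refine le_of_mul_le_mul_left ?_ hs
    calc _ = d * gaussAbs := by rw [mul_left_comm, hss, mul_comm]
      _ ≤ _ := h2

end Concentration

/-! ### Discretisation and conclusion -/

section Discretise

variable {d : ℕ}

local notation "𝔼" => EuclideanSpace ℝ (Fin d)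

/-- A finitely supported substitute for a pair of independent Gaussians, at `L¹` distance at most
`η` from it. -/
lemma exists_simple {η : ℝ} (hη : 0 < η) :
    ∃ P : SimpleFunc (𝔼 × 𝔼) (𝔼 × 𝔼),
      Integrable (fun z => ‖z - P z‖) ((stdGaussian 𝔼).prod (stdGaussian 𝔼)) ∧
      ∫ z, ‖z - P z‖ ∂((stdGaussian 𝔼).prod (stdGaussian 𝔼)) ≤ η := by
  set ν := (stdGaussian 𝔼).prod (stdGaussian 𝔼)
  have hid : Integrable (fun z : 𝔼 × 𝔼 => z) ν := by
    refine integrable_fst_snd.mono' (Continuous.aestronglyMeasurable (by fun_prop))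
      (Eventually.of_forall fun z => ?_)
    rw [Prod.norm_def]
    exact max_le_add_of_nonneg (norm_nonneg _) (norm_nonneg _)
  obtain ⟨P, hP, hPm⟩ := (memLp_one_iff_integrable.2 hid).exists_simpleFunc_eLpNorm_sub_lt
    (by simp) (ε := ENNReal.ofReal η) (by simpa using hη)
  have hsub : Integrable (fun z => z - P z) ν := hid.sub (memLp_one_iff_integrable.1 hPm)
  refine ⟨P, hsub.norm, ?_⟩
  rw [integral_norm_eq_lintegral_enorm hsub.aestronglyMeasurable]
  rw [eLpNorm_one_eq_lintegral_enorm] at hP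
  exact ENNReal.toReal_le_of_le_ofReal hη.le hP.le

/-- A finite walk whose length is at least `K * gaussAbs * √d / 2` while every `1`-Lipschitz
function varies by at most `K * (π + gaussAbs + 1)` along it. -/
lemma exists_walk (hd : 0 < d) : ∃ (K : ℝ) (l : List 𝔼), 0 < K ∧
    K * (gaussAbs * Real.sqrt d / 2) ≤ walkSum dist l ∧
    ∀ f : 𝔼 → ℝ, LipschitzWith 1 f →
      walkSum (fun x y => dist (f x) (f y)) l ≤ K * (Real.pi + gaussAbs + 1) := by
  classical
  have hc := gaussAbs_pos
  set c := gaussAbs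
  obtain ⟨P, hPi, hPη⟩ := exists_simple (d := d) (η := c / 4) (by positivity)
  set ν := (stdGaussian 𝔼).prod (stdGaussian 𝔼)
  let T : Set 𝔼 := Prod.fst '' (P.range : Set (𝔼 × 𝔼)) ∪ Prod.snd '' (P.range : Set (𝔼 × 𝔼))
  have hT : Bornology.IsBounded T :=
    ((P.range.finite_toSet.image _).union (P.range.finite_toSet.image _)).isBounded
  set D := Metric.diam T
  have hD : 0 ≤ D := Metric.diam_nonneg
  set N : ℝ := (P.range.card : ℝ)
  set K : ℝ := 3 * N * D + 1
  have hN : 0 ≤ N := Nat.cast_nonneg _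
  have hK : 0 < K := by positivity
  -- multiplicities proportional to the weights, rounded up
  let n : 𝔼 × 𝔼 → ℕ := fun p => ⌈K * ν.real (P ⁻¹' {p})⌉₊
  have hTP : ∀ p ∈ P.range, p.1 ∈ T ∧ p.2 ∈ T := fun p hp =>
    ⟨Or.inl ⟨p, hp, rfl⟩, Or.inr ⟨p, hp, rfl⟩⟩
  obtain ⟨l, -, hl⟩ := exists_list_of_edges T D hD n P.range hTP
  have hsum : ∀ ρ : 𝔼 → 𝔼 → ℝ, ρ 0 0 = 0 → ∫ z, ρ (P z).1 (P z).2 ∂ν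
      = ∑ p ∈ P.range, ν.real (P ⁻¹' {p}) * ρ p.1 p.2 := fun ρ h0 => by
    have h := SimpleFunc.map_integral P (fun p => ρ p.1 p.2)
      (SimpleFunc.integrable_of_isFiniteMeasure (μ := ν) P) h0
    rw [SimpleFunc.integral_eq_integral _ (SimpleFunc.integrable_of_isFiniteMeasure _)] at h
    exact h
  refine ⟨K, l, hK, ?_, fun f hf => ?_⟩
  · have h1 := (hl dist (fun _ _ => dist_nonneg) dist_comm
      fun x hx y hy => Metric.dist_le_diam_of_mem hT hx hy).1
    refine le_trans ?_ h1
    have h2 : K * ∫ z, dist (P z).1 (P z).2 ∂ν ≤ ∑ p ∈ P.range, n p * dist p.1 p.2 := by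
      rw [hsum _ (dist_self _), Finset.mul_sum]
      refine Finset.sum_le_sum fun p _ => ?_
      rw [← mul_assoc]
      exact mul_le_mul_of_nonneg_right (Nat.le_ceil _) dist_nonneg
    refine le_trans ?_ h2
    have h3 : c * Real.sqrt d - 2 * (c / 4) ≤ ∫ z, dist (P z).1 (P z).2 ∂ν := by
      have hi : Integrable (fun z => dist (P z).1 (P z).2) ν :=
        SimpleFunc.integrable_of_isFiniteMeasure (μ := ν) (P.map fun p : 𝔼 × 𝔼 => dist p.1 p.2)
      have h4 : ∫ z, dist z.1 z.2 ∂ν ≤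
          ∫ z, (dist (P z).1 (P z).2 + 2 * ‖z - P z‖) ∂ν := by
        refine integral_mono_of_nonneg (Eventually.of_forall fun _ => dist_nonneg)
          (hi.add (hPi.const_mul 2)) (Eventually.of_forall fun z => ?_)
        have a1 := dist_triangle4 z.1 (P z).1 (P z).2 z.2
        have a2 : dist z.1 (P z).1 ≤ ‖z - P z‖ := by
          rw [dist_eq_norm]; exact norm_fst_le (z - P z)
        have a3 : dist (P z).2 z.2 ≤ ‖z - P z‖ := by
          rw [dist_comm, dist_eq_norm]; exact norm_snd_le (z - P z)
        simp only
        linarith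
      rw [integral_add hi (hPi.const_mul 2), integral_const_mul] at h4
      have := le_integral_dist (d := d)
      linarith
    refine mul_le_mul_of_nonneg_left ?_ hK.le
    have h5 : (1 : ℝ) ≤ Real.sqrt d := Real.one_le_sqrt.2 (by exact_mod_cast hd)
    nlinarith
  · let ρ : 𝔼 → 𝔼 → ℝ := fun x y => dist (f x) (f y)
    have hρ : ∀ x y, ρ x y ≤ dist x y := fun x y => by simpa using hf.dist_le_mul x y
    have hρD : ∀ x ∈ T, ∀ y ∈ T, ρ x y ≤ D := fun x hx y hy =>
      (hρ x y).trans (Metric.dist_le_diam_of_mem hT hx hy)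
    have h1 := (hl ρ (fun _ _ => dist_nonneg) (fun _ _ => dist_comm _ _) hρD).2
    have h2 : ∑ p ∈ P.range, n p * ρ p.1 p.2 ≤ K * ∫ z, ρ (P z).1 (P z).2 ∂ν + N * D := by
      rw [hsum ρ (dist_self _), Finset.mul_sum, show N * D = ∑ p ∈ P.range, D by simp [N],
        ← Finset.sum_add_distrib]
      refine Finset.sum_le_sum fun p hp => ?_
      have b1 : (n p : ℝ) ≤ K * ν.real (P ⁻¹' {p}) + 1 :=
        (Nat.ceil_lt_add_one (by positivity)).le
      have b2 := hρD p.1 (hTP p hp).1 p.2 (hTP p hp).2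
      have b3 : 0 ≤ ρ p.1 p.2 := dist_nonneg
      nlinarith
    have h3 : ∫ z, ρ (P z).1 (P z).2 ∂ν ≤ Real.pi / 2 + 2 * (c / 4) := by
      have hi : Integrable (fun z : 𝔼 × 𝔼 => |f z.1 - f z.2|) ν := by
        refine integrable_lip_sub (c := 1) hf continuous_fst continuous_snd fun z => ?_
        rw [one_mul]
        exact dist_le_norm_add_norm _ _
      have h4 : ∫ z, ρ (P z).1 (P z).2 ∂ν ≤ ∫ z, (|f z.1 - f z.2| + 2 * ‖z - P z‖) ∂ν := by
        refine integral_mono_of_nonneg (Eventually.of_forall fun _ => dist_nonneg)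
          (hi.add (hPi.const_mul 2)) (Eventually.of_forall fun z => ?_)
        have a1 : ρ (P z).1 (P z).2 ≤ ρ (P z).1 z.1 + ρ z.1 z.2 + ρ z.2 (P z).2 :=
          dist_triangle4 _ _ _ _
        have a2 : ρ (P z).1 z.1 ≤ ‖z - P z‖ := by
          refine (hρ _ _).trans ?_
          rw [dist_comm, dist_eq_norm]; exact norm_fst_le (z - P z)
        have a3 : ρ z.2 (P z).2 ≤ ‖z - P z‖ := by
          refine (hρ _ _).trans ?_
          rw [dist_eq_norm]; exact norm_snd_le (z - P z)
        have a4 : ρ z.1 z.2 = |f z.1 - f z.2| := Real.dist_eq _ _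
        simp only
        linarith
      rw [integral_add hi (hPi.const_mul 2), integral_const_mul] at h4
      have := integral_lip_le hf
      linarith
    have h6 := mul_le_mul_of_nonneg_left h3 hK.le
    have h7 : 3 * N * D ≤ K := by simp [K]
    change walkSum ρ l ≤ _
    change walkSum ρ l ≤ 2 * _ + N * D at h1
    nlinarith

end Discretise

/-- There is a universal constant `C > 0` such that for every `d ≥ 2` there is a map
`γ : [0,1] → ℝ^d` with `0 < Var γ < ∞` and `LVar γ ≤ C d^{-1/2} (log d)^{1/2} Var γ`;
in particular `LCJ(ℝ^d) ≤ C d^{-1/2} (log d)^{1/2}`. -/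
theorem lcj_euclidean_upper : ∃ C : ℝ, 0 < C ∧ ∀ d : ℕ, 2 ≤ d →
    (∃ γ : ℝ → EuclideanSpace ℝ (Fin d),
      0 < Var 0 1 γ ∧ Var 0 1 γ < ⊤ ∧
      LVar 0 1 γ ≤ ENNReal.ofReal (C * Real.sqrt (Real.log d) / Real.sqrt d) * Var 0 1 γ) ∧
    LCJ (EuclideanSpace ℝ (Fin d)) ≤ ENNReal.ofReal (C * Real.sqrt (Real.log d) / Real.sqrt d) := by
  have hc := gaussAbs_pos
  have hlog2 : 0 < Real.sqrt (Real.log 2) := Real.sqrt_pos.2 (Real.log_pos (by norm_num))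
  set B : ℝ := 2 * (Real.pi + gaussAbs + 1) / gaussAbs with hB
  have hB0 : 0 < B := by positivity
  refine ⟨B / Real.sqrt (Real.log 2), by positivity, fun d hd => ?_⟩
  set A : ℝ := B / Real.sqrt (Real.log 2) * Real.sqrt (Real.log d) / Real.sqrt d
  have hsd : 0 < Real.sqrt d := Real.sqrt_pos.2 (by exact_mod_cast (by omega : 0 < d))
  -- `log 2 ≤ log d`, so the bound of order `d ^ (-1/2)` is stronger than the claim
  have hA : B / Real.sqrt d ≤ A := by
    refine div_le_div_of_nonneg_right ?_ hsd.le
    rw [div_mul_eq_mul_div, le_div_iff₀ hlog2]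
    gcongr
    exact_mod_cast hd
  obtain ⟨K, l, hK, hlow, hup⟩ := exists_walk (d := d) (by omega)
  obtain ⟨γ, hγ⟩ := exists_path_of_list l
  have hV : Var 0 1 γ = ENNReal.ofReal (walkSum dist l) := hγ _ id
  have hpos : 0 < walkSum dist l := lt_of_lt_of_le (by positivity) hlow
  have h1 : 0 < Var 0 1 γ := by rw [hV]; exact ENNReal.ofReal_pos.2 hpos
  have h2 : Var 0 1 γ < ⊤ := by rw [hV]; exact ENNReal.ofReal_lt_top
  have h3 : LVar 0 1 γ ≤ ENNReal.ofReal A * Var 0 1 γ := by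
    refine iSup_le fun f => ?_
    rw [hγ ℝ f.1, hV, ← ENNReal.ofReal_mul (le_trans (by positivity) hA)]
    refine ENNReal.ofReal_le_ofReal ((hup f.1 f.2).trans ?_)
    calc K * (Real.pi + gaussAbs + 1)
        = B / Real.sqrt d * (K * (gaussAbs * Real.sqrt d / 2)) := by
          rw [hB]; field_simp
      _ ≤ A * walkSum dist l := by
          refine mul_le_mul hA hlow (by positivity) (le_trans (by positivity) hA)
  refine ⟨⟨γ, h1, h2, h3⟩, ?_⟩
  have h4 : LCJ (EuclideanSpace ℝ (Fin d)) ≤ LVar 0 1 γ / Var 0 1 γ := by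
    unfold LCJ
    exact iInf_le_of_le 0 <| iInf_le_of_le 1 <| iInf_le_of_le one_pos <| iInf_le_of_le γ <|
      iInf_le_of_le h1 <| iInf_le_of_le h2 le_rfl
  exact h4.trans (ENNReal.div_le_of_le_mul h3)
end

section
/- There exists a universal constant C > 0 such that for every integer d ≥ 2 there is a map γ : [0,1] → S^{d-1} (the unit sphere of Euclidean ℝ^d, with the metric induced from the Euclidean norm) satisfying 0 < Var_γ < ∞ and LVar_γ ≤ C · d^{-1/2} (log d)^{1/2} · Var_γ. In particular, LCJ(S^{d-1}) ≤ C d^{-1/2}(log d)^{1/2}. -/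
/-!
The path is a step path on finitely many points of a flat torus in the sphere. With `k = ⌊d/2⌋` and
`m = 2k`, the points are `(e^{2πi x_1/m}, …, e^{2πi x_k/m}) / √k` for `x ∈ {0, …, m-1}^k`, viewed in
`ℝ^{2k} ⊆ ℝ^d`, and the jumps of the path run, twice, over all ordered pairs of points
(`exists_path`). Thus `Var γ` is twice the sum of all mutual distances, while `Var (f ∘ γ)` is twice
the sum of all `|f(P x) - f(P y)|`. The family is antipodally symmetric, so the mean distance is at
least `1` (`card_sq_le_sum_dist`), and it remains to see that the mean of `|f(P x) - f(P y)|` is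
`O(1/√k)` for every 1-Lipschitz `f`.

This is a concentration inequality on the grid. It follows from a dimension-free transport
inequality in dual form (`Tau`): if `g(x) ≤ f(y) + w(x,y)` for all `x, y`, then
`𝔼 exp g ≤ exp (𝔼 f + ε)`. The inequality tensorizes, with costs and errors adding up (`Tau.prod`,
`tau_pi`). On one factor, `w` is the squared distance `((i-j)/m)²/6` and `ε = 1/(2m²)` (`tau_fin`):
if `h` is the inf-convolution of `f` and `D` its oscillation, then `𝔼 exp h ≤ exp (𝔼 h + D²/2)` by
Hoeffding's lemma, and comparing `f(i)` with `h(i+n)`, `n ≈ D m`, yields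
`𝔼 f - 𝔼 h ≥ D²/2 - 1/(2m²)` (`gain`). On the `k`-fold product the error is at most `1`, and the
inf-convolution with the squared distance lowers a Lipschitz function by a bounded amount only, so
`√k (f ∘ P)` has exponential moments about its mean bounded independently of `k`
(`sum_abs_sub_le`). This gives the ratio `O(d^{-1/2})`, and `log d ≥ 1/2`.
-/

open Set ENNReal

/-! ### The transport inequality on a discrete interval and its tensorization -/

open Finset in
/-- If `v` dominates the sup-convolution of the `1/(3m)`-Lipschitz function `u` with the cost
`((i - j) / m) ^ 2 / 6`, then `v` exceeds `u` on average by half the square of any increment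
`D = u q - u p` with `p ≤ q`, up to `1 / (2 m ^ 2)`: compare `v i` with `u (i + n)`, where
`n ≈ D m`, and telescope. -/
lemma gain_of_le {m : ℕ} (hm : 0 < m) (u v : ℕ → ℝ) {p q : ℕ} (hpq : p ≤ q) (hq : q < m)
    (hu : ∀ i j, i < m → j < m → u i - u j ≤ |(i : ℝ) - j| / (3 * m))
    (hv : ∀ i j, i < m → j < m → u i ≤ v j + (((i : ℝ) - j) / m) ^ 2 / 6)
    (hD : u p ≤ u q) :
    m * (u q - u p) ^ 2 / 2 - 1 / (2 * m) ≤ ∑ i ∈ range m, (v i - u i) := by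
  have hm' : (0 : ℝ) < m := by exact_mod_cast hm
  obtain ⟨l, rfl⟩ := Nat.exists_eq_add_of_le hpq
  set D := u (p + l) - u p with hDdef
  have hD0 : 0 ≤ D := by linarith
  have hDm : 0 ≤ D * m := by positivity
  set n := ⌊D * m⌋₊ with hn
  have hn1 : (n : ℝ) ≤ D * m := Nat.floor_le hDm
  have hn2 : D * m < n + 1 := Nat.lt_floor_add_one _
  have hDl : D * m ≤ l / 3 := by
    have h := hu (p + l) p hq (by omega)
    have e : |((p + l : ℕ) : ℝ) - p| = l := by
      push_cast; rw [add_sub_cancel_left, abs_of_nonneg (by positivity)]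
    rw [e, le_div_iff₀ (by positivity)] at h
    linarith
  have hnl : n ≤ l := by
    have : (n : ℝ) ≤ l := by
      have : (0 : ℝ) ≤ l := by positivity
      linarith
    exact_mod_cast this
  obtain ⟨L, hL⟩ : ∃ L, L + n = l + 1 := ⟨l + 1 - n, by omega⟩
  -- Only the points `p, …, p + L - 1` are used; the other terms are nonnegative.
  have step1 : ∑ i ∈ range L, (v (p + i) - u (p + i)) ≤ ∑ i ∈ range m, (v i - u i) := by
    have e : ∑ i ∈ range L, (v (p + i) - u (p + i)) = ∑ i ∈ Ico p (p + L), (v i - u i) := by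
      rw [sum_Ico_eq_sum_range]; simp
    rw [e]
    apply sum_le_sum_of_subset_of_nonneg
    · intro i hi
      simp only [Finset.mem_Ico, Finset.mem_range] at *
      omega
    · intro i hi _
      have h := hv i i (Finset.mem_range.1 hi) (Finset.mem_range.1 hi)
      simp at h
      linarith
  have step2 : ∑ i ∈ range L, (u (p + (i + n)) - u (p + i)) - m * ((n : ℝ) / m) ^ 2 / 6 ≤
      ∑ i ∈ range L, (v (p + i) - u (p + i)) := by
    have hLm : (L : ℝ) ≤ m := by
      have : L ≤ m := by omega
      exact_mod_cast this
    have h2 : (L : ℝ) * (((n : ℝ) / m) ^ 2 / 6) ≤ m * ((n : ℝ) / m) ^ 2 / 6 := by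
      rw [mul_div_assoc]; gcongr
    have h3 : ∑ i ∈ range L, (u (p + (i + n)) - u (p + i) - ((n : ℝ) / m) ^ 2 / 6) ≤
        ∑ i ∈ range L, (v (p + i) - u (p + i)) := by
      apply sum_le_sum
      intro i hi
      have hi := Finset.mem_range.1 hi
      have h := hv (p + (i + n)) (p + i) (by omega) (by omega)
      have e : ((p + (i + n) : ℕ) : ℝ) - (p + i : ℕ) = n := by push_cast; ring
      rw [e] at h
      linarith
    rw [sum_sub_distrib, sum_const, card_range, nsmul_eq_mul] at h3
    linarith
  have tele : ∑ i ∈ range L, (u (p + (i + n)) - u (p + i)) =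
      ∑ i ∈ range n, (u (p + (L + i)) - u (p + i)) := by
    have a1 := sum_range_add_sum_Ico (fun i => u (p + i)) (show n ≤ L + n by omega)
    have a2 := sum_range_add_sum_Ico (fun i => u (p + i)) (show L ≤ L + n by omega)
    rw [sum_Ico_eq_sum_range] at a1 a2
    simp only [Nat.add_sub_cancel, Nat.add_sub_cancel_left] at a1 a2
    rw [sum_sub_distrib, sum_sub_distrib]
    simp only [add_comm _ n]
    linarith
  have step3 : (n : ℝ) * (D - n / (3 * m)) ≤
      ∑ i ∈ range n, (u (p + (L + i)) - u (p + i)) := by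
    have : ∑ i ∈ range n, (D - n / (3 * m)) ≤
        ∑ i ∈ range n, (u (p + (L + i)) - u (p + i)) := by
      apply sum_le_sum
      intro i hi
      have hi := Finset.mem_range.1 hi
      have h1 := hu (p + l) (p + (L + i)) hq (by omega)
      have h2 := hu (p + i) p (by omega) (by omega)
      have hl : (l : ℝ) = L + n - 1 := by
        have : ((L + n : ℕ) : ℝ) = (l + 1 : ℕ) := by rw [hL]
        push_cast at this; linarith
      have hin : (i : ℝ) + 1 ≤ n := by exact_mod_cast hi
      have e1 : |((p + l : ℕ) : ℝ) - (p + (L + i) : ℕ)| = n - 1 - i := by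
        push_cast
        rw [abs_of_nonneg] <;> rw [hl] <;> linarith
      have e2 : |((p + i : ℕ) : ℝ) - p| = i := by
        push_cast; rw [add_sub_cancel_left, abs_of_nonneg (by positivity)]
      rw [e1] at h1
      rw [e2] at h2
      have : (n - 1 - i : ℝ) / (3 * m) + i / (3 * m) ≤ n / (3 * m) := by
        rw [← add_div]; gcongr; linarith
      linarith
    rwa [sum_const, card_range, nsmul_eq_mul] at this
  have key : m * D ^ 2 / 2 - 1 / (2 * m) ≤
      (n : ℝ) * (D - n / (3 * m)) - m * ((n : ℝ) / m) ^ 2 / 6 := by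
    have h : (n : ℝ) * (D - n / (3 * m)) - m * ((n : ℝ) / m) ^ 2 / 6 =
        m * D ^ 2 / 2 - (D * m - n) ^ 2 / (2 * m) := by
      field_simp; ring
    rw [h]
    have : (D * m - n) ^ 2 ≤ 1 := by nlinarith
    gcongr
  linarith

open Finset in
/-- `gain_of_le` without the order hypothesis on `p` and `q`, by reflecting `range m`. -/
lemma gain {m : ℕ} (hm : 0 < m) (u v : ℕ → ℝ) {p q : ℕ} (hp : p < m) (hq : q < m)
    (hu : ∀ i j, i < m → j < m → u i - u j ≤ |(i : ℝ) - j| / (3 * m))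
    (hv : ∀ i j, i < m → j < m → u i ≤ v j + (((i : ℝ) - j) / m) ^ 2 / 6)
    (hD : u p ≤ u q) :
    m * (u q - u p) ^ 2 / 2 - 1 / (2 * m) ≤ ∑ i ∈ range m, (v i - u i) := by
  rcases le_total p q with h | h
  · exact gain_of_le hm u v h hq hu hv hD
  · have cast_rev : ∀ i, i < m → ((m - 1 - i : ℕ) : ℝ) = m - 1 - i := by
      intro i hi
      rw [Nat.cast_sub (by omega), Nat.cast_sub (by omega)]; simp
    have key := gain_of_le hm (fun i => u (m - 1 - i)) (fun i => v (m - 1 - i))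
      (p := m - 1 - p) (q := m - 1 - q) (by omega) (by omega)
      (by
        intro i j hi hj
        have := hu (m - 1 - i) (m - 1 - j) (by omega) (by omega)
        rw [cast_rev i hi, cast_rev j hj] at this
        rwa [show (m - 1 - i - (m - 1 - j) : ℝ) = -(i - j) by ring, abs_neg] at this)
      (by
        intro i j hi hj
        have := hv (m - 1 - i) (m - 1 - j) (by omega) (by omega)
        rw [cast_rev i hi, cast_rev j hj] at this
        rwa [show (m - 1 - i - (m - 1 - j) : ℝ) = -(i - j) by ring, neg_div, neg_sq] at this)
      (by
        simp only [show m - 1 - (m - 1 - p) = p by omega, show m - 1 - (m - 1 - q) = q by omega]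
        exact hD)
    simp only [show m - 1 - (m - 1 - p) = p by omega,
      show m - 1 - (m - 1 - q) = q by omega] at key
    rwa [sum_range_reflect (fun i => v i - u i) m] at key

/-- A form of Hoeffding's lemma on a finite uniform space, with a non-optimal constant. -/
lemma sum_exp_le_of_osc {ι : Type*} [Fintype ι] [Nonempty ι] (h : ι → ℝ) (D : ℝ)
    (hD : ∀ x y, h x - h y ≤ D) :
    ∑ x, Real.exp (h x) ≤
      Fintype.card ι * Real.exp ((∑ x, h x) / Fintype.card ι + D ^ 2 / 2) := by
  set N : ℝ := (Fintype.card ι : ℝ) with hN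
  have hN0 : 0 < N := by rw [hN]; exact_mod_cast Fintype.card_pos
  set E := (∑ x, h x) / N with hE
  have hEN : ∑ x, h x = N * E := by rw [hE]; field_simp
  have jensen : N ≤ ∑ y, Real.exp (E - h y) := by
    have : ∑ y, (E - h y + 1) ≤ ∑ y, Real.exp (E - h y) :=
      Finset.sum_le_sum fun y _ => Real.add_one_le_exp _
    rw [Finset.sum_add_distrib, Finset.sum_sub_distrib, hEN] at this
    simp only [Finset.sum_const, Finset.card_univ, nsmul_eq_mul, mul_one] at this
    linarith
  -- Symmetrization: an independent copy turns the exponential into a hyperbolic cosine.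
  have dbl : ∑ x, ∑ y, Real.exp (h x - h y) ≤ N * (N * Real.exp (D ^ 2 / 2)) := by
    have sym : ∑ x, ∑ y, Real.exp (h x - h y) = ∑ x, ∑ y, Real.cosh (h x - h y) := by
      have h1 : ∑ x, ∑ y, Real.exp (h x - h y) = ∑ x, ∑ y, Real.exp (-(h x - h y)) := by
        rw [Finset.sum_comm]
        simp only [neg_sub]
      have h2 : ∑ x, ∑ y, Real.cosh (h x - h y) =
          (∑ x, ∑ y, Real.exp (h x - h y) + ∑ x, ∑ y, Real.exp (-(h x - h y))) / 2 := by
        simp only [Real.cosh_eq, ← Finset.sum_div, Finset.sum_add_distrib]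
      rw [h2, ← h1]; ring
    rw [sym]
    calc ∑ x, ∑ y, Real.cosh (h x - h y) ≤ ∑ _x : ι, ∑ _y : ι, Real.exp (D ^ 2 / 2) := by
          refine Finset.sum_le_sum fun x _ => Finset.sum_le_sum fun y _ => ?_
          refine (Real.cosh_le_exp_half_sq _).trans (Real.exp_le_exp.2 ?_)
          have := sq_le_sq' (by linarith [hD y x] : -D ≤ h x - h y) (hD x y)
          linarith
      _ = _ := by simp [← hN]
  have prod : (∑ x, Real.exp (h x)) * ∑ y, Real.exp (E - h y) =
      Real.exp E * ∑ x, ∑ y, Real.exp (h x - h y) := by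
    rw [Finset.sum_mul_sum, Finset.mul_sum]
    refine Finset.sum_congr rfl fun x _ => ?_
    rw [Finset.mul_sum]
    refine Finset.sum_congr rfl fun y _ => ?_
    rw [← Real.exp_add, ← Real.exp_add]; ring_nf
  have S0 : 0 ≤ ∑ x, Real.exp (h x) := Finset.sum_nonneg fun _ _ => (Real.exp_pos _).le
  have : (∑ x, Real.exp (h x)) * N ≤ Real.exp E * (N * (N * Real.exp (D ^ 2 / 2))) :=
    calc _ ≤ (∑ x, Real.exp (h x)) * ∑ y, Real.exp (E - h y) :=
          mul_le_mul_of_nonneg_left jensen S0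
      _ = _ := prod
      _ ≤ _ := mul_le_mul_of_nonneg_left dbl (Real.exp_pos _).le
  rw [Real.exp_add]
  refine le_of_mul_le_mul_right (this.trans_eq ?_) hN0
  ring

/-- The transport inequality, in dual form, for the uniform measure on a finite type with cost `w`
and additive error `ε`: whenever `g ≤ inf_y (f y + w · y)`, the exponential mean of `g` is at
most `exp (mean of f + ε)`. -/
def Tau (ι : Type*) [Fintype ι] (w : ι → ι → ℝ) (ε : ℝ) : Prop :=
  ∀ f g : ι → ℝ, (∀ x y, g x ≤ f y + w x y) →
    ∑ x, Real.exp (g x) ≤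
      Fintype.card ι * Real.exp ((∑ x, f x) / Fintype.card ι + ε)

/-- The discrete interval of `m` points satisfies the transport inequality for the squared distance
`((i - j) / m) ^ 2 / 6`. Replacing `g` by the inf-convolution `h` of `f`, which is Lipschitz, the
exponential mean of `h` exceeds the exponential of its mean by at most `exp (osc h ^ 2 / 2)`, and
`gain` shows that the mean of `f` exceeds that of `h` by nearly as much. -/
lemma tau_fin {m : ℕ} (hm : 0 < m) :
    Tau (Fin m) (fun i j => (((i : ℕ) - (j : ℕ) : ℝ) / m) ^ 2 / 6) (1 / (2 * m ^ 2)) := by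
  intro f g hfg
  have : NeZero m := ⟨hm.ne'⟩
  have hm' : (0 : ℝ) < m := by exact_mod_cast hm
  have hex : ∀ x : Fin m, ∃ y : Fin m, ∀ z : Fin m,
      f y + (((x : ℕ) - (y : ℕ) : ℝ) / m) ^ 2 / 6 ≤
      f z + (((x : ℕ) - (z : ℕ) : ℝ) / m) ^ 2 / 6 := fun x => Finite.exists_min _
  choose Y hY using hex
  set h : Fin m → ℝ := fun x => f (Y x) + (((x : ℕ) - (Y x : ℕ) : ℝ) / m) ^ 2 / 6 with hh
  have hgh : ∀ x, g x ≤ h x := fun x => hfg x (Y x)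
  have hlip : ∀ x z : Fin m, h x - h z ≤ |((x : ℕ) : ℝ) - (z : ℕ)| / (3 * m) := by
    intro x z
    have h1 : h x ≤ f (Y z) + (((x : ℕ) - (Y z : ℕ) : ℝ) / m) ^ 2 / 6 := hY x (Y z)
    have h2 : h z = f (Y z) + (((z : ℕ) - (Y z : ℕ) : ℝ) / m) ^ 2 / 6 := rfl
    set a : ℝ := ((x : ℕ) : ℝ)
    set b : ℝ := ((z : ℕ) : ℝ)
    set c : ℝ := ((Y z : ℕ) : ℝ)
    have ha0 : 0 ≤ a := by positivity
    have hb0 : 0 ≤ b := by positivity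
    have hc0 : 0 ≤ c := by positivity
    have ha1 : a ≤ m := Nat.cast_le.2 x.2.le
    have hb1 : b ≤ m := Nat.cast_le.2 z.2.le
    have hc1 : c ≤ m := Nat.cast_le.2 (Y z).2.le
    have h3 : (a - c) ^ 2 - (b - c) ^ 2 ≤ |a - b| * (2 * m) := by
      have : (a - c) ^ 2 - (b - c) ^ 2 = (a - b) * (a + b - 2 * c) := by ring
      rw [this]
      refine (le_abs_self _).trans ?_
      rw [abs_mul]
      gcongr
      rw [abs_le]; constructor <;> linarith
    have h4 : ((a - c) / m) ^ 2 / 6 - ((b - c) / m) ^ 2 / 6 ≤ |a - b| / (3 * m) := by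
      have e1 : ((a - c) / m) ^ 2 / 6 - ((b - c) / m) ^ 2 / 6 =
          ((a - c) ^ 2 - (b - c) ^ 2) / (6 * m ^ 2) := by field_simp
      have e2 : |a - b| / (3 * m) = |a - b| * (2 * m) / (6 * m ^ 2) := by field_simp; ring
      rw [e1, e2]; gcongr
    linarith
  obtain ⟨p, hp⟩ := Finite.exists_min h
  obtain ⟨q, hq⟩ := Finite.exists_max h
  have hoeff := sum_exp_le_of_osc h (h q - h p) (fun x y => by linarith [hp y, hq x])
  have hmk : ∀ i : Fin m, Fin.ofNat m (i : ℕ) = i := fun i => by simp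
  have hval : ∀ i, i < m → ((Fin.ofNat m i : Fin m) : ℕ) = i := fun i hi => Nat.mod_eq_of_lt hi
  have gn := gain hm (fun i => h (Fin.ofNat m i)) (fun i => f (Fin.ofNat m i)) p.2 q.2
    (by
      intro i j hi hj
      have := hlip (Fin.ofNat m i) (Fin.ofNat m j)
      rwa [hval i hi, hval j hj] at this)
    (by
      intro i j hi hj
      have := hY (Fin.ofNat m i) (Fin.ofNat m j)
      rw [hval i hi, hval j hj] at this
      simp only [hh, hval i hi]
      exact this)
    (by simp only [hmk]; exact hp q)
  rw [← Fin.sum_univ_eq_sum_range (fun i => f (Fin.ofNat m i) - h (Fin.ofNat m i)) m] at gn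
  simp only [hmk, Finset.sum_sub_distrib] at gn
  calc ∑ x, Real.exp (g x) ≤ ∑ x, Real.exp (h x) :=
        Finset.sum_le_sum fun x _ => Real.exp_le_exp.2 (hgh x)
    _ ≤ _ := hoeff
    _ ≤ _ := by
        rw [Fintype.card_fin]
        gcongr ?_ * Real.exp ?_
        have e : (∑ x, h x) / (m : ℝ) + (h q - h p) ^ 2 / 2 =
          (∑ x, h x + m * (h q - h p) ^ 2 / 2) / m := by field_simp
        have e' : (∑ x, f x) / (m : ℝ) + 1 / (2 * m ^ 2) =
          (∑ x, f x + 1 / (2 * m)) / m := by field_simp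
        rw [e, e']
        gcongr ?_ / _
        linarith

/-- The transport inequality tensorizes: costs and errors add up. -/
lemma Tau.prod {α β : Type*} [Fintype α] [Fintype β] [Nonempty β]
    {w : α → α → ℝ} {w' : β → β → ℝ} {ε ε' : ℝ} (h : Tau α w ε) (h' : Tau β w' ε') :
    Tau (α × β) (fun x y => w x.1 y.1 + w' x.2 y.2) (ε + ε') := by
  intro f g hfg
  have hB : (0 : ℝ) < Fintype.card β := by exact_mod_cast Fintype.card_pos
  set B : ℝ := (Fintype.card β : ℝ)
  -- For fixed first coordinates, the inequality on `β` bounds the partial exponential mean of `g`.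
  have h1 : ∀ x y, ∑ b, Real.exp (g (x, b)) ≤
      B * Real.exp ((∑ b, f (y, b)) / B + w x y + ε') := by
    intro x y
    have := h' (fun b => f (y, b) + w x y) (fun b => g (x, b))
      (fun b c => by have := hfg (x, b) (y, c); simp only at this ⊢; linarith)
    rw [Finset.sum_add_distrib] at this
    simp only [Finset.sum_const, Finset.card_univ, nsmul_eq_mul] at this
    rwa [add_div, mul_div_cancel_left₀ _ hB.ne'] at this
  have hpos : ∀ x, 0 < ∑ b, Real.exp (g (x, b)) := fun x =>
    Finset.sum_pos (fun _ _ => Real.exp_pos _) Finset.univ_nonempty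
  have h2 := h (fun y => (∑ b, f (y, b)) / B + ε')
    (fun x => Real.log ((∑ b, Real.exp (g (x, b))) / B)) (by
      intro x y
      rw [Real.log_le_iff_le_exp (div_pos (hpos x) hB), div_le_iff₀ hB]
      refine (h1 x y).trans_eq ?_
      rw [mul_comm]; ring_nf)
  simp only [Real.exp_log (div_pos (hpos _) hB)] at h2
  rw [← Finset.sum_div, Finset.sum_add_distrib, ← Finset.sum_div, div_le_iff₀ hB] at h2
  rw [Fintype.sum_prod_type, Fintype.sum_prod_type, Fintype.card_prod]
  refine h2.trans_eq ?_
  rcases isEmpty_or_nonempty α with hα | hα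
  · simp
  have hA : (0 : ℝ) < Fintype.card α := by exact_mod_cast Fintype.card_pos
  push_cast
  simp only [Finset.sum_const, Finset.card_univ, nsmul_eq_mul]
  rw [add_div, mul_div_cancel_left₀ _ hA.ne', div_div, mul_comm B, add_comm ε, ← add_assoc]
  ring

lemma Tau.equiv {α β : Type*} [Fintype α] [Fintype β] {w : α → α → ℝ} {ε : ℝ} (h : Tau α w ε)
    (e : β ≃ α) : Tau β (fun x y => w (e x) (e y)) ε := by
  intro f g hfg
  have := h (f ∘ e.symm) (g ∘ e.symm) (fun x y => by simpa using hfg (e.symm x) (e.symm y))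
  rw [Fintype.card_congr e]
  simpa [Equiv.sum_comp e.symm (fun x => Real.exp (g x)), Equiv.sum_comp e.symm f] using this

lemma tau_pi {α : Type*} [Fintype α] [Nonempty α] {w : α → α → ℝ} {ε : ℝ} (h : Tau α w ε)
    (k : ℕ) : Tau (Fin k → α) (fun x y => ∑ j, w (x j) (y j)) (k * ε) := by
  induction k with
  | zero =>
    intro f g hfg
    simpa using hfg default default
  | succ k ih =>
    have := (h.prod ih).equiv (Fin.consEquiv (fun _ : Fin (k + 1) => α)).symm
    convert this using 1
    · funext x y
      rw [Fin.sum_univ_succ]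
      rfl
    · push_cast; ring

/-! ### Concentration on the grid and the step path -/

/-- Mean-deviation form of the concentration given by the transport inequality on the grid
`(Fin m) ^ k`, for functions that are Lipschitz for the Euclidean metric of mesh `1 / m`. -/
lemma sum_abs_sub_le {k m : ℕ} (hk : 0 < k) (hkm : k ≤ m) (F : (Fin k → Fin m) → ℝ)
    (hF : ∀ x y, (F x - F y) ^ 2 ≤ 80 * ∑ j, (((x j : ℕ) - (y j : ℕ) : ℝ) / m) ^ 2) :
    ∑ x, ∑ y, |F x - F y| ≤ 4 * Real.exp 121 * (Fintype.card (Fin k → Fin m) : ℝ) ^ 2 := by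
  have hm : 0 < m := by omega
  have : NeZero m := ⟨hm.ne'⟩
  have hN : (0 : ℝ) < (Fintype.card (Fin k → Fin m) : ℝ) := by exact_mod_cast Fintype.card_pos
  set N : ℝ := (Fintype.card (Fin k → Fin m) : ℝ)
  have herr : (k : ℝ) * (1 / (2 * m ^ 2)) ≤ 1 := by
    have h1 : (1 : ℝ) ≤ m := by exact_mod_cast hm
    have h2 : (k : ℝ) ≤ m := by exact_mod_cast hkm
    rw [mul_one_div, div_le_one (by positivity)]
    nlinarith
  -- The Lipschitz bound makes `G - 120` a lower bound for the inf-convolution of `G`.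
  have one_sided : ∀ G : (Fin k → Fin m) → ℝ,
      (∀ x y, (G x - G y) ^ 2 ≤ 80 * ∑ j, (((x j : ℕ) - (y j : ℕ) : ℝ) / m) ^ 2) →
      ∑ x, Real.exp (G x - (∑ x, G x) / N) ≤ N * Real.exp 121 := by
    intro G hG
    have t := tau_pi (tau_fin hm) k G (fun x => G x - 120) (by
      intro x y
      have h := hG x y
      simp only [← Finset.sum_div]
      set r := G x - G y with hr
      nlinarith [sq_nonneg (r - 240)])
    calc ∑ x, Real.exp (G x - (∑ x, G x) / N)
        = (∑ x, Real.exp (G x - 120)) * Real.exp (120 - (∑ x, G x) / N) := by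
          rw [Finset.sum_mul]
          refine Finset.sum_congr rfl fun x _ => ?_
          rw [← Real.exp_add]; ring_nf
      _ ≤ (N * Real.exp ((∑ x, G x) / N + k * (1 / (2 * m ^ 2)))) *
          Real.exp (120 - (∑ x, G x) / N) := by gcongr
      _ = N * Real.exp (120 + k * (1 / (2 * m ^ 2))) := by
          rw [mul_assoc, ← Real.exp_add]; ring_nf
      _ ≤ N * Real.exp 121 := by
          gcongr
          linarith
  set E := (∑ x, F x) / N with hE
  have h1 := one_sided F hF
  have h2 := one_sided (fun x => - F x) (fun x y => by
    rw [show (-F x - -F y) ^ 2 = (F x - F y) ^ 2 by ring]; exact hF x y)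
  rw [Finset.sum_neg_distrib, neg_div] at h2
  have h3 : ∑ x, |F x - E| ≤ 2 * Real.exp 121 * N := by
    have : ∑ x, |F x - E| ≤ ∑ x, (Real.exp (F x - E) + Real.exp (-F x - -E)) := by
      refine Finset.sum_le_sum fun x _ => abs_le.2 ⟨?_, ?_⟩
      · have a := Real.add_one_le_exp (-F x - -E)
        have b := Real.exp_pos (F x - E)
        linarith
      · have a := Real.add_one_le_exp (F x - E)
        have b := Real.exp_pos (-F x - -E)
        linarith
    rw [Finset.sum_add_distrib] at this
    linarith
  calc ∑ x, ∑ y, |F x - F y| ≤ ∑ x, ∑ y, (|F x - E| + |F y - E|) := by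
        refine Finset.sum_le_sum fun x _ => Finset.sum_le_sum fun y _ => ?_
        rw [abs_sub_comm (F y) E]
        exact abs_sub_le _ _ _
    _ = 2 * N * ∑ x, |F x - E| := by
        simp only [Finset.sum_add_distrib, Finset.sum_const, Finset.card_univ, nsmul_eq_mul,
          ← Finset.mul_sum]
        ring
    _ ≤ 2 * N * (2 * Real.exp 121 * N) := by gcongr
    _ = _ := by ring

lemma eVariationOn_step {E : Type*} [PseudoEMetricSpace E] (z : ℕ → E) {N : ℕ} (hN : 0 < N) :
    eVariationOn (fun t : ℝ => z ⌊t * N⌋₊) (Icc 0 1) =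
      ∑ i ∈ Finset.range N, edist (z (i + 1)) (z i) := by
  have hN' : (0 : ℝ) < N := by exact_mod_cast hN
  apply le_antisymm
  · have h1 : eVariationOn (z ∘ fun t : ℝ => ⌊t * N⌋₊) (Icc 0 1) ≤ eVariationOn z (Icc 0 N) := by
      apply eVariationOn.comp_le_of_monotoneOn
      · intro s _ t _ hst
        exact Nat.floor_mono (by gcongr)
      · intro t ht
        refine ⟨Nat.zero_le _, ?_⟩
        apply Nat.floor_le_of_le
        nlinarith [ht.2]
    refine h1.trans ?_
    have h2 := eVariationOn.sum' z (I := fun i => i) monotone_id (n := N)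
    rw [← h2]
    refine Finset.sum_le_sum fun i _ => ?_
    have hpair : Icc i (i + 1) = {i, i + 1} := by
      ext j
      simp only [Set.mem_Icc, Set.mem_insert_iff, Set.mem_singleton_iff]
      omega
    rw [hpair, eVariationOn.pair, edist_comm]
  · have h := eVariationOn.sum_le_of_monotoneOn_Iic (f := fun t : ℝ => z ⌊t * N⌋₊)
      (s := Icc 0 1) (n := N) (u := fun i => (i : ℝ) / N)
      (by intro i _ j _ hij; simp only; gcongr)
      (by
        intro i hi
        refine ⟨by positivity, ?_⟩
        rw [div_le_one hN']
        exact_mod_cast hi)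
    simpa [div_mul_cancel₀ _ hN'.ne', -Nat.cast_add] using h

lemma sum_range_mul_eq {A : Type*} [AddCommMonoid A] (f : ℕ → A) (a n : ℕ) :
    ∑ i ∈ Finset.range (a * n), f i =
      ∑ i ∈ Finset.range a, ∑ j ∈ Finset.range n, f (i * n + j) := by
  induction a with
  | zero => simp
  | succ a ih => rw [Nat.succ_mul, Finset.sum_range_add, ih, Finset.sum_range_succ]

/-- A finite family of points is visited by a step path whose jumps run, twice, over all ordered
pairs of the family. -/
lemma exists_path {ι M : Type*} [Fintype ι] [Nonempty ι] (P : ι → M) :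
    ∃ γ : ℝ → M, ∀ (E : Type) [PseudoEMetricSpace E] (f : M → E),
      eVariationOn (f ∘ γ) (Icc 0 1) = 2 * ∑ x, ∑ y, edist (f (P x)) (f (P y)) := by
  set n := Fintype.card ι with hn
  have hn0 : 0 < n := Fintype.card_pos
  have : NeZero n := ⟨hn0.ne'⟩
  let e : Fin n ≃ ι := (Fintype.equivFin ι).symm
  let p : ℕ → M := fun i => P (e (Fin.ofNat n i))
  -- At even times the path is at the point number `q mod n`, at odd times at number `q / n`.
  let z : ℕ → M := fun i => if i % 2 = 0 then p (i / 2) else p (i / 2 / n)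
  refine ⟨fun t => z ⌊t * (n * n * 2 : ℕ)⌋₊, fun E _ f => ?_⟩
  have hstep := eVariationOn_step (fun i => f (z i)) (N := n * n * 2) (by positivity)
  refine Eq.trans hstep ?_
  rw [sum_range_mul_eq, sum_range_mul_eq]
  have inner : ∀ a ∈ Finset.range n, ∑ b ∈ Finset.range n, ∑ c ∈ Finset.range 2,
      edist (f (z ((a * n + b) * 2 + c + 1))) (f (z ((a * n + b) * 2 + c))) =
      2 * ∑ y, edist (f (p a)) (f (P y)) := by
    intro a _
    have z0 : ∀ q, z (q * 2) = p q := by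
      intro q
      simp only [z, show q * 2 % 2 = 0 by omega, if_true, show q * 2 / 2 = q by omega]
    have z1 : ∀ q, z (q * 2 + 1) = p (q / n) := by
      intro q
      simp only [z, show (q * 2 + 1) % 2 = 1 by omega, show (q * 2 + 1) / 2 = q by omega]
      simp
    have hp : ∀ a b, p (a * n + b) = p b := by
      intro a b
      simp only [p]
      congr 2
      ext
      simp [Nat.mul_comm a n]
    have h1 : ∀ b ∈ Finset.range n, ∑ c ∈ Finset.range 2,
        edist (f (z ((a * n + b) * 2 + c + 1))) (f (z ((a * n + b) * 2 + c))) =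
        edist (f (p a)) (f (p b)) + edist (f (p a)) (f (p (b + 1))) := by
      intro b hb
      have hb := Finset.mem_range.1 hb
      have hdiv : (a * n + b) / n = a := by
        rw [Nat.mul_comm, Nat.mul_add_div hn0, Nat.div_eq_of_lt hb, add_zero]
      rw [Finset.sum_range_succ, Finset.sum_range_one, add_zero, z1, z0,
        show (a * n + b) * 2 + 1 + 1 = (a * n + (b + 1)) * 2 by ring, z0, hdiv, hp, hp,
        edist_comm (f (p (b + 1)))]
    rw [Finset.sum_congr rfl h1, Finset.sum_add_distrib,
      ← Fin.sum_univ_eq_sum_range (fun b => edist (f (p a)) (f (p b))),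
      ← Fin.sum_univ_eq_sum_range (fun b => edist (f (p a)) (f (p (b + 1)))), two_mul]
    have c1 : ∀ b : Fin n, p (b : ℕ) = P (e b) := by intro b; simp [p]
    have c2 : ∀ b : Fin n, p ((b : ℕ) + 1) = P (e (b + 1)) := by
      intro b
      simp only [p]
      congr 2
      ext
      simp [Fin.val_add]
    simp only [c1, c2]
    congr 1
    · exact Equiv.sum_comp e (fun y => edist (f (p a)) (f (P y)))
    · exact Equiv.sum_comp ((Equiv.addRight (1 : Fin n)).trans e)
        (fun y => edist (f (p a)) (f (P y)))
  rw [Finset.sum_congr rfl inner, ← Finset.mul_sum,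
    ← Fin.sum_univ_eq_sum_range (fun a => ∑ y, edist (f (p a)) (f (P y)))]
  congr 1
  rw [← Equiv.sum_comp e]
  refine Finset.sum_congr rfl fun a _ => ?_
  simp [p]

/-! ### The flat torus in the sphere -/

/-- The coordinate embedding `ℝ^α → ℝ^β` along an injection of index types. -/
noncomputable def extendIsometry {α β : Type*} [Fintype α] [Fintype β] (e : α ↪ β) :
    EuclideanSpace ℝ α →ₗᵢ[ℝ] EuclideanSpace ℝ β where
  toFun v := WithLp.toLp 2 (Function.extend e v 0)
  map_add' v w := by
    ext i
    by_cases h : ∃ a, e a = i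
    · obtain ⟨a, rfl⟩ := h
      simp [e.injective.extend_apply]
    · simp [Function.extend_apply' _ _ _ h]
  map_smul' c v := by
    ext i
    by_cases h : ∃ a, e a = i
    · obtain ⟨a, rfl⟩ := h
      simp [e.injective.extend_apply]
    · simp [Function.extend_apply' _ _ _ h]
  norm_map' v := by
    rw [EuclideanSpace.norm_eq, EuclideanSpace.norm_eq]
    congr 1
    symm
    apply Fintype.sum_of_injective e e.injective
    · intro i hi
      have h : ¬ ∃ a, e a = i := hi
      simp [Function.extend_apply' _ _ _ h]
    · intro i
      simp [e.injective.extend_apply]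

/-- The point of the product of `k` circles of radius `1/√k` with angles `2π x_j / m`. -/
noncomputable def torusPoint {k m : ℕ} (x : Fin k → Fin m) : EuclideanSpace ℝ (Fin k × Fin 2) :=
  WithLp.toLp 2 fun a =>
    (if a.2 = 0 then Real.cos (2 * Real.pi * (x a.1 : ℕ) / m)
      else Real.sin (2 * Real.pi * (x a.1 : ℕ) / m)) / Real.sqrt k

lemma norm_torusPoint {k m : ℕ} (hk : 0 < k) (x : Fin k → Fin m) : ‖torusPoint x‖ = 1 := by
  have hk' : (0 : ℝ) < k := by exact_mod_cast hk
  rw [EuclideanSpace.norm_eq, Real.sqrt_eq_one]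
  simp only [torusPoint, Real.norm_eq_abs, sq_abs, Fintype.sum_prod_type, Fin.sum_univ_two,
    div_pow, Real.sq_sqrt hk'.le]
  simp only [if_true, if_neg one_ne_zero, ← add_div, Real.cos_sq_add_sin_sq]
  simp [hk'.ne']

lemma norm_torusPoint_sub {k m : ℕ} (hk : 0 < k) (hm : 0 < m) (x y : Fin k → Fin m) :
    ‖torusPoint x - torusPoint y‖ ^ 2 ≤
      80 * (∑ j, (((x j : ℕ) - (y j : ℕ) : ℝ) / m) ^ 2) / k := by
  have hk' : (0 : ℝ) < k := by exact_mod_cast hk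
  have hm' : (0 : ℝ) < m := by exact_mod_cast hm
  rw [EuclideanSpace.norm_sq_eq]
  simp only [torusPoint, Real.norm_eq_abs, sq_abs, Fintype.sum_prod_type, Fin.sum_univ_two,
    PiLp.sub_apply, ← sub_div, div_pow _ (Real.sqrt k), Real.sq_sqrt hk'.le]
  simp only [if_true, if_neg one_ne_zero, ← add_div, ← Finset.sum_div]
  gcongr ?_ / _
  rw [Finset.mul_sum]
  refine Finset.sum_le_sum fun j _ => ?_
  set s : ℝ := 2 * Real.pi * (x j : ℕ) / m with hs
  set t : ℝ := 2 * Real.pi * (y j : ℕ) / m with ht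
  have h1 := sq_le_sq.2 (Real.abs_cos_sub_cos_le s t)
  have h2 := sq_le_sq.2 (Real.abs_sin_sub_sin_le s t)
  have h3 : s - t = 2 * Real.pi * (((x j : ℕ) - (y j : ℕ) : ℝ) / m) := by rw [hs, ht]; ring
  rw [h3, mul_pow, mul_pow] at h1 h2
  have hpi : Real.pi ^ 2 ≤ 10 := by nlinarith [Real.pi_lt_d2, Real.pi_pos]
  nlinarith [sq_nonneg (((x j : ℕ) - (y j : ℕ) : ℝ) / m)]

/-- Shifting every angle by `π` is a bijection of the grid and gives the antipodal point. -/
lemma torusPoint_shift {k r : ℕ} [NeZero (2 * r)] (x : Fin k → Fin (2 * r)) :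
    torusPoint (x + fun _ => Fin.ofNat (2 * r) r) = -torusPoint x := by
  have hr : 0 < r := by have := NeZero.pos (2 * r); omega
  have hr' : (0 : ℝ) < r := by exact_mod_cast hr
  have angle : ∀ i : Fin (2 * r), ∃ q : ℕ,
      2 * Real.pi * ((i + Fin.ofNat (2 * r) r : Fin (2 * r)) : ℕ) / (2 * r : ℕ) =
      2 * Real.pi * (i : ℕ) / (2 * r : ℕ) + Real.pi - q * (2 * Real.pi) := by
    intro i
    have h : ((i + Fin.ofNat (2 * r) r : Fin (2 * r)) : ℕ) = ((i : ℕ) + r) % (2 * r) := by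
      simp [Fin.val_add]
    refine ⟨((i : ℕ) + r) / (2 * r), ?_⟩
    rw [h]
    have h' : (((((i : ℕ) + r) % (2 * r) : ℕ)) : ℝ) =
        i + r - (2 * r) * ((((i : ℕ) + r) / (2 * r) : ℕ) : ℝ) := by
      have := Nat.mod_add_div ((i : ℕ) + r) (2 * r)
      have : (((((i : ℕ) + r) % (2 * r) + (2 * r) * (((i : ℕ) + r) / (2 * r)) : ℕ)) : ℝ) =
        ((i : ℕ) + r : ℕ) := by rw [this]
      push_cast at this ⊢
      linarith
    rw [h']
    push_cast
    field_simp
  ext a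
  obtain ⟨q, hq⟩ := angle (x a.1)
  simp only [torusPoint, Pi.add_apply, PiLp.neg_apply, hq, Real.cos_sub_nat_mul_two_pi,
    Real.sin_sub_nat_mul_two_pi, Real.cos_add_pi, Real.sin_add_pi]
  split_ifs <;> ring

lemma sum_edist_eq {ι M : Type*} [Fintype ι] [PseudoMetricSpace M] (P : ι → M) :
    2 * ∑ x, ∑ y, edist (P x) (P y) = ENNReal.ofReal (2 * ∑ x, ∑ y, dist (P x) (P y)) := by
  rw [ENNReal.ofReal_mul zero_le_two, ENNReal.ofReal_ofNat,
    ENNReal.ofReal_sum_of_nonneg fun _ _ => Finset.sum_nonneg fun _ _ => dist_nonneg]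
  congr 1
  refine Finset.sum_congr rfl fun x _ => ?_
  rw [ENNReal.ofReal_sum_of_nonneg fun _ _ => dist_nonneg]
  simp only [edist_dist]

/-- An antipodally symmetric finite family on the unit sphere has mean distance at least `1`. -/
lemma card_sq_le_sum_dist {ι V : Type*} [Fintype ι] [NormedAddCommGroup V] [NormedSpace ℝ V]
    (P : ι → V) (hP : ∀ x, ‖P x‖ = 1) (σ : ι ≃ ι) (hσ : ∀ x, P (σ x) = -P x) :
    (Fintype.card ι : ℝ) ^ 2 ≤ ∑ x, ∑ y, dist (P x) (P y) := by
  have h : ∀ x, (Fintype.card ι : ℝ) ≤ ∑ y, dist (P x) (P y) := by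
    intro x
    have h1 : ∑ y, dist (P x) (P (σ y)) = ∑ y, dist (P x) (P y) :=
      Equiv.sum_comp σ (fun y => dist (P x) (P y))
    have h2 : ∑ _y : ι, (2 : ℝ) ≤ ∑ y, (dist (P x) (P y) + dist (P x) (P (σ y))) := by
      refine Finset.sum_le_sum fun y _ => ?_
      rw [hσ, dist_eq_norm, dist_eq_norm, sub_neg_eq_add]
      calc (2 : ℝ) = ‖(2 : ℝ) • P x‖ := by rw [norm_smul, hP]; norm_num
        _ = ‖(P x - P y) + (P x + P y)‖ := by congr 1; rw [two_smul]; abel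
        _ ≤ _ := norm_add_le _ _
    rw [Finset.sum_add_distrib, h1] at h2
    simp only [Finset.sum_const, Finset.card_univ, nsmul_eq_mul] at h2
    linarith
  calc (Fintype.card ι : ℝ) ^ 2 = ∑ _x : ι, (Fintype.card ι : ℝ) := by simp [sq]
    _ ≤ _ := Finset.sum_le_sum fun x _ => h x

/-- There is a universal constant `C > 0` such that for every `d ≥ 2` there is a map
`γ : [0,1] → S^{d-1}` with `0 < Var γ < ∞` and `LVar γ ≤ C d^{-1/2} (log d)^{1/2} Var γ`;
in particular `LCJ(S^{d-1}) ≤ C d^{-1/2} (log d)^{1/2}`. -/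
theorem lcj_sphere_upper : ∃ C : ℝ, 0 < C ∧ ∀ d : ℕ, 2 ≤ d →
    (∃ γ : ℝ → Metric.sphere (0 : EuclideanSpace ℝ (Fin d)) 1,
      0 < Var 0 1 γ ∧ Var 0 1 γ < ⊤ ∧
      LVar 0 1 γ ≤ ENNReal.ofReal (C * Real.sqrt (Real.log d) / Real.sqrt d) * Var 0 1 γ) ∧
    LCJ (Metric.sphere (0 : EuclideanSpace ℝ (Fin d)) 1) ≤
      ENNReal.ofReal (C * Real.sqrt (Real.log d) / Real.sqrt d) := by
  refine ⟨16 * Real.exp 121, by positivity, fun d hd => ?_⟩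
  obtain ⟨k, hk⟩ : ∃ k, k = d / 2 := ⟨_, rfl⟩
  have hk0 : 0 < k := by omega
  have hk' : (0 : ℝ) < k := by exact_mod_cast hk0
  have : NeZero (2 * k) := ⟨by omega⟩
  obtain ⟨e⟩ : Nonempty (Fin k × Fin 2 ↪ Fin d) :=
    Function.Embedding.nonempty_of_card_le (by simp; omega)
  let Q : (Fin k → Fin (2 * k)) → EuclideanSpace ℝ (Fin d) := fun x =>
    extendIsometry e (torusPoint x)
  have hQ : ∀ x, ‖Q x‖ = 1 := fun x => by
    simp only [Q, LinearIsometry.norm_map, norm_torusPoint hk0]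
  let P : (Fin k → Fin (2 * k)) → Metric.sphere (0 : EuclideanSpace ℝ (Fin d)) 1 := fun x =>
    ⟨Q x, by simp [hQ]⟩
  obtain ⟨γ, hγ⟩ := exists_path P
  set n : ℝ := (Fintype.card (Fin k → Fin (2 * k)) : ℝ) with hn
  have hn0 : 0 < n := by rw [hn]; exact_mod_cast Fintype.card_pos
  set S : ℝ := ∑ x, ∑ y, dist (P x) (P y) with hS
  have hSn : n ^ 2 ≤ S := by
    refine card_sq_le_sum_dist Q hQ (Equiv.addRight fun _ => Fin.ofNat (2 * k) k) fun x => ?_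
    simp only [Q, Equiv.coe_addRight, torusPoint_shift, map_neg]
  have hS0 : 0 < S := lt_of_lt_of_le (by positivity) hSn
  have hVar : Var 0 1 γ = ENNReal.ofReal (2 * S) := by
    rw [hS, ← sum_edist_eq]
    exact hγ _ id
  set B : ℝ := 16 * Real.exp 121 * Real.sqrt (Real.log d) / Real.sqrt d with hB
  have hBk : 4 * Real.exp 121 / Real.sqrt k ≤ B := by
    have hd0 : (0 : ℝ) < d := by
      have : 0 < d := by omega
      exact_mod_cast this
    have hd3 : (d : ℝ) ≤ 3 * k := by
      have : d ≤ 3 * k := by omega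
      exact_mod_cast this
    have hlog : (1 / 2 : ℝ) ≤ Real.log d := by
      have h2 : Real.log 2 ≤ Real.log d := Real.log_le_log (by norm_num) (by exact_mod_cast hd)
      linarith [Real.log_two_gt_d9]
    have hsq : Real.sqrt d ≤ 4 * (Real.sqrt (Real.log d) * Real.sqrt k) := by
      rw [← Real.sqrt_mul (by linarith), Real.sqrt_le_left (by positivity), mul_pow,
        Real.sq_sqrt (by positivity)]
      nlinarith
    rw [hB, div_le_div_iff₀ (Real.sqrt_pos.2 hk') (Real.sqrt_pos.2 hd0)]
    nlinarith [Real.exp_pos 121]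
  have hLVar : LVar 0 1 γ ≤ ENNReal.ofReal B * Var 0 1 γ := by
    have hB0 : 0 ≤ B := by positivity
    refine iSup_le ?_
    rintro ⟨f, hf⟩
    have hf' : ∀ x y, |f (P x) - f (P y)| ≤ ‖torusPoint x - torusPoint y‖ := by
      intro x y
      have h := hf.dist_le_mul (P x) (P y)
      rw [NNReal.coe_one, one_mul, Real.dist_eq, Subtype.dist_eq, dist_eq_norm] at h
      refine h.trans_eq ?_
      change ‖extendIsometry e (torusPoint x) - extendIsometry e (torusPoint y)‖ = _
      rw [← map_sub, LinearIsometry.norm_map]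
    -- Rescaling by `√k` makes `f ∘ P` Lipschitz, uniformly in `k`, in the grid coordinates.
    have conc := sum_abs_sub_le hk0 (by omega : k ≤ 2 * k) (fun x => Real.sqrt k * f (P x)) (by
      intro x y
      have h1 := norm_torusPoint_sub hk0 (by omega : 0 < 2 * k) x y
      have h2 := pow_le_pow_left₀ (abs_nonneg _) (hf' x y) 2
      rw [sq_abs] at h2
      have h3 := h2.trans h1
      rw [le_div_iff₀ hk'] at h3
      rw [← mul_sub, mul_pow, Real.sq_sqrt hk'.le]
      linarith)
    have hsum : ∑ x, ∑ y, |f (P x) - f (P y)| ≤ B * S := by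
      simp only [← mul_sub, abs_mul, abs_of_nonneg (Real.sqrt_nonneg _), ← Finset.mul_sum] at conc
      rw [mul_comm, ← le_div_iff₀ (Real.sqrt_pos.2 hk')] at conc
      calc _ ≤ 4 * Real.exp 121 * n ^ 2 / Real.sqrt k := conc
        _ = 4 * Real.exp 121 / Real.sqrt k * n ^ 2 := by ring
        _ ≤ B * S := by gcongr
    calc Var 0 1 (f ∘ γ) = 2 * ∑ x, ∑ y, edist (f (P x)) (f (P y)) := hγ _ f
      _ = ENNReal.ofReal (2 * ∑ x, ∑ y, dist (f (P x)) (f (P y))) :=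
          sum_edist_eq (fun x => f (P x))
      _ ≤ ENNReal.ofReal (B * (2 * S)) := by
          apply ENNReal.ofReal_le_ofReal
          simp only [Real.dist_eq]
          linarith
      _ = ENNReal.ofReal B * Var 0 1 γ := by rw [hVar, ENNReal.ofReal_mul hB0]
  have hpos : 0 < Var 0 1 γ := by rw [hVar, ENNReal.ofReal_pos]; positivity
  have hfin : Var 0 1 γ < ⊤ := by rw [hVar]; exact ENNReal.ofReal_lt_top
  refine ⟨⟨γ, hpos, hfin, hLVar⟩, ?_⟩
  calc LCJ _ ≤ LVar 0 1 γ / Var 0 1 γ :=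
        iInf_le_of_le 0 <| iInf_le_of_le 1 <| iInf_le_of_le one_pos <| iInf_le_of_le γ <|
          iInf_le_of_le hpos <| iInf_le_of_le hfin le_rfl
    _ ≤ _ := ENNReal.div_le_of_le_mul hLVar
end

section
/- Let d ≥ 4, let λ_{d-1} be the rotation-invariant probability measure on the unit sphere S^{d-1} ⊂ ℝ^d, and let f : S^{d-1} → ℝ be 1-Lipschitz (with respect to the Euclidean metric). Then for every ε > 0, ∫_{S^{d-1}} |f(x) − f(−x)| dλ_{d-1}(x) ≤ 12 e^{−dε²/8} + 2ε. Consequently, ∫_{S^{d-1}} |f(x) − f(−x)| dλ_{d-1}(x) ≤ C d^{-1/2}(log d)^{1/2} for a universal constant C. -/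
/-!
The integral is bounded by `(π √2 + 2) / √d`, which together with the trivial bound `2` implies both
claims: if `2 ε < 6.5 / √d` then `d ε² / 8 < 3 / 2`, and `12 e^{-3/2} ≥ 2`; moreover `log d ≥ 1`.

For the bound itself, extend `f` to the ambient space and mollify: on the sphere `f` is a uniform
limit of `C¹` functions `F` with `‖F'‖ ≤ 1` (`exists_smooth_approx`). For each `r : ℤ/d` the involution
`i ↦ r - i` pairs up the coordinates, apart from its fixed points. Rotating simultaneously in all
the paired coordinate planes, with a choice of orientation of each plane, gives a one-parameter
group `R θ` of isometries with a skew generator `J`. Now `R π x` differs from `-x` only in the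
fixed coordinates, and by rotation invariance of `μ`
`∫ |F (R π x) - F x| dμ ≤ ∫ ∫₀^π |F'(R θ x) (J (R θ x))| dθ dμ = π ∫ |F'(x) (J x)| dμ`
(`integral_abs_pairRot_sub_le`).

Finally, average over `r` and over all orientations. Random orientations make the contributions of
distinct planes orthogonal, and every pair `(i, j)` occurs for exactly one `r = i + j`, so the mean
of `(F'(x) (J x))²` is at most `2 ‖F'(x)‖² ‖x‖² / d ≤ 2 / d` (`sum_matching_sq_le`). Likewise each
`i` is fixed for exactly one `r`, so the mean square of the fixed part of `x` is `1 / d`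
(`sum_norm_fixedPart_le`). The Cauchy–Schwarz inequality gives the two terms of the constant.
-/

open MeasureTheory

/-- The map on the unit sphere induced by a linear isometric equivalence (rotation)
of the ambient Euclidean space. -/
noncomputable def sphereRot {d : ℕ}
    (e : EuclideanSpace ℝ (Fin d) ≃ₗᵢ[ℝ] EuclideanSpace ℝ (Fin d))
    (x : Metric.sphere (0 : EuclideanSpace ℝ (Fin d)) 1) :
    Metric.sphere (0 : EuclideanSpace ℝ (Fin d)) 1 :=
  ⟨e x, by
    rw [mem_sphere_zero_iff_norm, e.norm_map]
    exact mem_sphere_zero_iff_norm.mp x.2⟩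

/-! ### Averaging over matchings and orientations -/

/-- Orthogonality of independent random signs. -/
lemma sum_signs_sq {ι : Type*} [Fintype ι] [DecidableEq ι] (b : ι → ℝ) :
    ∑ η : ι → ℤˣ, (∑ k, ((η k : ℤ) : ℝ) * b k) ^ 2
      = Fintype.card (ι → ℤˣ) * ∑ k, b k ^ 2 := by
  have key : ∀ i j : ι, ∑ η : ι → ℤˣ, ((η i : ℤ) : ℝ) * ((η j : ℤ) : ℝ)
      = if i = j then (Fintype.card (ι → ℤˣ) : ℝ) else 0 := by
    intro i j
    split_ifs with h
    · subst h
      have : ∀ η : ι → ℤˣ, ((η i : ℤ) : ℝ) * ((η i : ℤ) : ℝ) = 1 := by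
        intro η
        rcases Int.units_eq_one_or (η i) with h | h <;> simp [h]
      simp [this]
    · -- flipping the `i`-th sign negates the summand
      have h2 := Equiv.sum_comp (Equiv.mulLeft (Pi.mulSingle i (-1 : ℤˣ)))
        (fun η : ι → ℤˣ => ((η i : ℤ) : ℝ) * ((η j : ℤ) : ℝ))
      have h3 : ∀ η : ι → ℤˣ,
          (((Equiv.mulLeft (Pi.mulSingle i (-1 : ℤˣ)) η) i : ℤ) : ℝ)
            * (((Equiv.mulLeft (Pi.mulSingle i (-1 : ℤˣ)) η) j : ℤ) : ℝ)
          = -(((η i : ℤ) : ℝ) * ((η j : ℤ) : ℝ)) := by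
        intro η
        simp [Pi.mulSingle_eq_of_ne (Ne.symm h)]
      simp only [h3, Finset.sum_neg_distrib] at h2
      linarith
  calc ∑ η : ι → ℤˣ, (∑ k, ((η k : ℤ) : ℝ) * b k) ^ 2
      = ∑ η : ι → ℤˣ, ∑ i, ∑ j, b i * b j * (((η i : ℤ) : ℝ) * ((η j : ℤ) : ℝ)) := by
        refine Finset.sum_congr rfl fun η _ => ?_
        rw [sq, Finset.sum_mul_sum]
        refine Finset.sum_congr rfl fun i _ => Finset.sum_congr rfl fun j _ => by ring
    _ = ∑ i, ∑ j, b i * b j * ∑ η : ι → ℤˣ, ((η i : ℤ) : ℝ) * ((η j : ℤ) : ℝ) := by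
        rw [Finset.sum_comm]
        refine Finset.sum_congr rfl fun i _ => ?_
        rw [Finset.sum_comm]
        simp only [Finset.mul_sum]
    _ = _ := by
        simp only [key, Finset.mul_sum]
        refine Finset.sum_congr rfl fun i _ => ?_
        simp
        ring

/-- The orientation signs of the planes spanned by the coordinates `i` and `σ i`, for an
involution `σ`: a function with `c (σ i) = -c i`, equal to `±1` off the fixed points of `σ` and to
`0` on them. The sign of a pair is read off from `η` at its smaller element. -/
def pairSign {ι : Type*} [LinearOrder ι] (σ : Equiv.Perm ι) (η : ι → ℤˣ) (i : ι) : ℝ :=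
  (if i < σ i then ((η i : ℤ) : ℝ) else 0) - (if σ i < i then ((η (σ i) : ℤ) : ℝ) else 0)

lemma pairSign_anti {ι : Type*} [LinearOrder ι] (σ : Equiv.Perm ι) (hσ : ∀ i, σ (σ i) = i)
    (η : ι → ℤˣ) (i : ι) : pairSign σ η (σ i) = - pairSign σ η i := by
  simp [pairSign, hσ]

lemma pairSign_sq {ι : Type*} [LinearOrder ι] (σ : Equiv.Perm ι)
    (η : ι → ℤˣ) (i : ι) (hi : σ i ≠ i) : pairSign σ η i ^ 2 = 1 := by
  have h1 : ∀ u : ℤˣ, ((u : ℤ) : ℝ) ^ 2 = 1 := by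
    intro u
    rcases Int.units_eq_one_or u with h | h <;> simp [h]
  rcases lt_or_gt_of_ne hi with h | h
  · simp [pairSign, h, h.not_gt, h1]
  · simp [pairSign, h, h.not_gt, h1]

/-- Averaging over the orientations leaves only the diagonal terms; the factor `2` comes from
bounding the square of the two terms of each pair. -/
lemma sum_pairSign_sq_le {ι : Type*} [Fintype ι] [LinearOrder ι] (σ : Equiv.Perm ι)
    (hσ : ∀ i, σ (σ i) = i) (v x : ι → ℝ) :
    ∑ η : ι → ℤˣ, (∑ i, v i * (pairSign σ η i * x (σ i))) ^ 2
      ≤ Fintype.card (ι → ℤˣ) * (2 * ∑ i, v i ^ 2 * x (σ i) ^ 2) := by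
  -- `b k` collects the two terms of the pair `{k, σ k}`, at its smaller element.
  set b : ι → ℝ := fun k => if k < σ k then v k * x (σ k) - v (σ k) * x k else 0 with hb
  have h1 : ∀ η : ι → ℤˣ, ∑ i, v i * (pairSign σ η i * x (σ i))
      = ∑ k, ((η k : ℤ) : ℝ) * b k := by
    intro η
    have e1 : ∑ i, (if σ i < i then ((η (σ i) : ℤ) : ℝ) else 0) * (v i * x (σ i))
        = ∑ i, (if i < σ i then ((η i : ℤ) : ℝ) else 0) * (v (σ i) * x i) := by
      rw [← Equiv.sum_comp σ]
      simp only [hσ]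
    calc _ = ∑ i, (if i < σ i then ((η i : ℤ) : ℝ) else 0) * (v i * x (σ i))
          - ∑ i, (if σ i < i then ((η (σ i) : ℤ) : ℝ) else 0) * (v i * x (σ i)) := by
          rw [← Finset.sum_sub_distrib]
          refine Finset.sum_congr rfl fun i _ => ?_
          rw [pairSign]; ring
      _ = _ := by
          rw [e1, ← Finset.sum_sub_distrib]
          refine Finset.sum_congr rfl fun i _ => ?_
          simp only [hb]
          split_ifs <;> ring
  simp only [h1]
  rw [sum_signs_sq]
  gcongr
  have e2 : ∑ i, (if σ i < i then v i ^ 2 * x (σ i) ^ 2 else 0)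
      = ∑ i, (if i < σ i then v (σ i) ^ 2 * x i ^ 2 else 0) := by
    rw [← Equiv.sum_comp σ]
    simp only [hσ]
  calc ∑ k, b k ^ 2
      ≤ ∑ k, (2 * (if k < σ k then v k ^ 2 * x (σ k) ^ 2 else 0)
          + 2 * (if k < σ k then v (σ k) ^ 2 * x k ^ 2 else 0)) := by
        refine Finset.sum_le_sum fun k _ => ?_
        simp only [hb]
        split_ifs
        · nlinarith [sq_nonneg (v k * x (σ k) + v (σ k) * x k)]
        · simp
    _ = ∑ k, (2 * (if k < σ k then v k ^ 2 * x (σ k) ^ 2 else 0)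
          + 2 * (if σ k < k then v k ^ 2 * x (σ k) ^ 2 else 0)) := by
        rw [Finset.sum_add_distrib, Finset.sum_add_distrib, ← Finset.mul_sum, ← Finset.mul_sum,
          ← Finset.mul_sum, e2]
    _ ≤ _ := by
        rw [Finset.mul_sum]
        refine Finset.sum_le_sum fun k _ => ?_
        have : 0 ≤ v k ^ 2 * x (σ k) ^ 2 := by positivity
        rcases lt_trichotomy k (σ k) with h | h | h
        · simp [h, h.not_gt]
        · simp only [← h, lt_irrefl, if_false]; 
          nlinarith [mul_nonneg (sq_nonneg (v k)) (sq_nonneg (x k))]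
        · simp [h, h.not_gt]

/-- Sum over all matchings `i ↦ r - i` and all orientations: each ordered pair `(i, j)` is matched
for exactly one `r`, namely `r = i + j`. -/
lemma sum_matching_sq_le {d : ℕ} [NeZero d] (v x : Fin d → ℝ)
    (hv : ∑ i, v i ^ 2 ≤ 1) (hx : ∑ i, x i ^ 2 = 1) :
    ∑ r : Fin d, ∑ η : Fin d → ℤˣ,
      (∑ i, v i * (pairSign (Equiv.subLeft r) η i * x (Equiv.subLeft r i))) ^ 2
      ≤ Fintype.card (Fin d → ℤˣ) * 2 := by
  calc _ ≤ ∑ r : Fin d, (Fintype.card (Fin d → ℤˣ) : ℝ) *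
        (2 * ∑ i, v i ^ 2 * x (Equiv.subLeft r i) ^ 2) :=
        Finset.sum_le_sum fun r _ => sum_pairSign_sq_le _ (by simp) v x
    _ = Fintype.card (Fin d → ℤˣ) * (2 * ∑ i, v i ^ 2) := by
        rw [← Finset.mul_sum, ← Finset.mul_sum, Finset.sum_comm]
        congr 2
        refine Finset.sum_congr rfl fun i _ => ?_
        have : ∑ r : Fin d, x (r - i) ^ 2 = 1 := by
          rw [← hx]
          exact Equiv.sum_comp (Equiv.subRight i) (fun k => x k ^ 2)
        simp [← Finset.mul_sum, this]
    _ ≤ _ := by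
        gcongr; linarith

/-! ### Simultaneous rotation in paired coordinate planes -/

/-- The orthogonal projection onto the coordinates fixed by `σ`. -/
noncomputable def fixedPart {d : ℕ} (σ : Equiv.Perm (Fin d)) :
    EuclideanSpace ℝ (Fin d) →ₗ[ℝ] EuclideanSpace ℝ (Fin d) where
  toFun x := WithLp.toLp 2 fun i => if σ i = i then x i else 0
  map_add' x y := by ext i; by_cases h : σ i = i <;> simp [h]
  map_smul' a x := by ext i; simp

/-- The linear map `(J x)ᵢ = cᵢ x_{σ i}`. For an involution `σ` and signs `c` with `c (σ i) = -c i`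
this is the skew generator of the rotations `pairRot σ c`. -/
noncomputable def pairGen {d : ℕ} (σ : Equiv.Perm (Fin d)) (c : Fin d → ℝ) :
    EuclideanSpace ℝ (Fin d) →ₗ[ℝ] EuclideanSpace ℝ (Fin d) where
  toFun x := WithLp.toLp 2 fun i => c i * x (σ i)
  map_add' x y := by ext i; simp [mul_add]
  map_smul' a x := by ext i; simp [mul_left_comm]

/-- The rotation by the angle `θ` in all the planes spanned by the coordinates `i` and `σ i` with
`σ i ≠ i`, oriented by `c`; the coordinates fixed by `σ` do not move. -/
noncomputable def pairRot {d : ℕ} (σ : Equiv.Perm (Fin d)) (c : Fin d → ℝ) (θ : ℝ) :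
    EuclideanSpace ℝ (Fin d) →ₗ[ℝ] EuclideanSpace ℝ (Fin d) :=
  fixedPart σ + Real.cos θ • (LinearMap.id - fixedPart σ) + Real.sin θ • pairGen σ c

lemma pairRot_apply {d : ℕ} (σ : Equiv.Perm (Fin d)) (c : Fin d → ℝ) (θ : ℝ)
    (x : EuclideanSpace ℝ (Fin d)) :
    pairRot σ c θ x = fixedPart σ x + Real.cos θ • (x - fixedPart σ x)
      + Real.sin θ • pairGen σ c x := by
  simp [pairRot]

lemma norm_pairRot {d : ℕ} (σ : Equiv.Perm (Fin d)) (c : Fin d → ℝ)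
    (hσ : ∀ i, σ (σ i) = i) (hc : ∀ i, c (σ i) = -c i) (hc1 : ∀ i, σ i ≠ i → c i ^ 2 = 1)
    (θ : ℝ) (x : EuclideanSpace ℝ (Fin d)) : ‖pairRot σ c θ x‖ = ‖x‖ := by
  rw [← sq_eq_sq₀ (norm_nonneg _) (norm_nonneg _), EuclideanSpace.real_norm_sq_eq,
    EuclideanSpace.real_norm_sq_eq]
  set a : Fin d → ℝ := fun i => if σ i = i then 1 else Real.cos θ with ha
  have haσ : ∀ i, a (σ i) = a i := by
    intro i
    simp only [ha, σ.apply_eq_iff_eq]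
  have h0 : ∀ i, pairRot σ c θ x i = a i * x i + Real.sin θ * c i * x (σ i) := by
    intro i
    rw [pairRot_apply]
    by_cases h : σ i = i <;> simp [fixedPart, pairGen, ha, h] <;> ring
  have hcross : ∑ i, a i * c i * (x i * x (σ i)) = 0 := by
    have h := Equiv.sum_comp σ (fun i => a i * c i * (x i * x (σ i)))
    simp only [hσ, hc, haσ] at h
    have h' : ∑ i, a i * -c i * (x (σ i) * x i) = -∑ i, a i * c i * (x i * x (σ i)) := by
      rw [← Finset.sum_neg_distrib]
      exact Finset.sum_congr rfl fun i _ => by ring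
    linarith
  have hre : ∑ i, c i ^ 2 * x (σ i) ^ 2 = ∑ i, c i ^ 2 * x i ^ 2 := by
    rw [← Equiv.sum_comp σ (fun i => c i ^ 2 * x i ^ 2)]
    simp only [hc, neg_sq]
  calc ∑ i, pairRot σ c θ x i ^ 2
      = ∑ i, a i ^ 2 * x i ^ 2 + Real.sin θ ^ 2 * ∑ i, c i ^ 2 * x (σ i) ^ 2
        + 2 * Real.sin θ * ∑ i, a i * c i * (x i * x (σ i)) := by
        simp only [Finset.mul_sum, ← Finset.sum_add_distrib, h0]
        exact Finset.sum_congr rfl fun i _ => by ring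
    _ = ∑ i, (a i ^ 2 + Real.sin θ ^ 2 * c i ^ 2) * x i ^ 2 := by
        rw [hcross, hre, mul_zero, add_zero, Finset.mul_sum, ← Finset.sum_add_distrib]
        exact Finset.sum_congr rfl fun i _ => by ring
    _ = _ := by
        refine Finset.sum_congr rfl fun i _ => ?_
        by_cases h : σ i = i
        · have := hc i
          rw [h] at this
          have h2 : c i = 0 := by linarith
          simp [ha, h, h2]
        · simp [ha, h, hc1 i h]

/-- `pairRot` as an isometry of the ambient space. -/
noncomputable def pairRotEquiv {d : ℕ} (σ : Equiv.Perm (Fin d)) (c : Fin d → ℝ)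
    (hσ : ∀ i, σ (σ i) = i) (hc : ∀ i, c (σ i) = -c i) (hc1 : ∀ i, σ i ≠ i → c i ^ 2 = 1)
    (θ : ℝ) : EuclideanSpace ℝ (Fin d) ≃ₗᵢ[ℝ] EuclideanSpace ℝ (Fin d) :=
  LinearIsometry.toLinearIsometryEquiv ⟨pairRot σ c θ, norm_pairRot σ c hσ hc hc1 θ⟩ rfl

/-- The flow equation of `R θ`: its velocity at the point `R θ x` is `J (R θ x)`. -/
lemma hasDerivAt_pairRot {d : ℕ} (σ : Equiv.Perm (Fin d)) (c : Fin d → ℝ)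
    (hσ : ∀ i, σ (σ i) = i) (hc : ∀ i, c (σ i) = -c i) (hc1 : ∀ i, σ i ≠ i → c i ^ 2 = 1)
    (x : EuclideanSpace ℝ (Fin d)) (θ : ℝ) :
    HasDerivAt (fun t => pairRot σ c t x) (pairGen σ c (pairRot σ c θ x)) θ := by
  have hfix : ∀ i, σ i = i → c i = 0 := by
    intro i h
    have := hc i
    rw [h] at this
    linarith
  have hJP : pairGen σ c (fixedPart σ x) = 0 := by
    ext i
    by_cases h : σ i = i
    · simp [pairGen, hfix i h]
    · simp [pairGen, fixedPart, hσ, Ne.symm h]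
  have hJJ : pairGen σ c (pairGen σ c x) = -(x - fixedPart σ x) := by
    ext i
    by_cases h : σ i = i
    · simp [pairGen, fixedPart, hfix i h, h]
    · have := hc1 i h
      simp only [pairGen, fixedPart, hσ, hc, h, LinearMap.coe_mk, AddHom.coe_mk, if_false,
        PiLp.neg_apply, PiLp.sub_apply, sub_zero]
      linear_combination (-x i) * this
  have hv : pairGen σ c (pairRot σ c θ x)
      = (-Real.sin θ) • (x - fixedPart σ x) + Real.cos θ • pairGen σ c x := by
    rw [pairRot_apply]
    simp only [map_add, map_smul, map_sub, hJP, hJJ]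
    module
  rw [hv]
  simp only [pairRot_apply]
  exact (((Real.hasDerivAt_cos θ).smul_const (x - fixedPart σ x)).const_add _).add
    ((Real.hasDerivAt_sin θ).smul_const _)

/-! ### Smoothing -/

/-- Convolution with a bump function of integral `1` supported in a ball of radius `δ` keeps the
Lipschitz constant and moves a `1`-Lipschitz function by at most `δ`. -/
lemma exists_smooth_approx {E : Type*} [NormedAddCommGroup E] [InnerProductSpace ℝ E]
    [FiniteDimensional ℝ E] [MeasurableSpace E] [BorelSpace E] {g : E → ℝ}
    (hg : LipschitzWith 1 g) {δ : ℝ} (hδ : 0 < δ) :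
    ∃ F : E → ℝ, ContDiff ℝ 1 F ∧ LipschitzWith 1 F ∧ ∀ x, |F x - g x| ≤ δ := by
  let φ : ContDiffBump (0 : E) := ⟨δ / 2, δ, by linarith, by linarith⟩
  have hint : ∀ x, Integrable (fun t => φ.normed volume t * g (x - t)) (volume : Measure E) := by
    intro x
    refine Continuous.integrable_of_hasCompactSupport ?_ ?_
    · exact φ.continuous_normed.mul (hg.continuous.comp (by fun_prop))
    · exact φ.hasCompactSupport_normed.mul_right
  refine ⟨convolution (φ.normed volume) g (ContinuousLinearMap.lsmul ℝ ℝ) volume, ?_, ?_, ?_⟩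
  · exact_mod_cast HasCompactSupport.contDiff_convolution_left (n := 1) _ φ.hasCompactSupport_normed
      φ.contDiff_normed hg.continuous.locallyIntegrable
  · refine LipschitzWith.of_dist_le_mul fun x y => ?_
    simp only [convolution, ContinuousLinearMap.lsmul_apply, smul_eq_mul]
    rw [Real.dist_eq, ← integral_sub (hint x) (hint y)]
    calc |∫ t, (φ.normed volume t * g (x - t) - φ.normed volume t * g (y - t))|
        ≤ ∫ t, |φ.normed volume t * g (x - t) - φ.normed volume t * g (y - t)| :=
          abs_integral_le_integral_abs
      _ ≤ ∫ t, φ.normed volume t * dist x y := by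
          refine integral_mono ((hint x).sub (hint y)).abs (φ.integrable_normed.mul_const _)
            fun t => ?_
          simp only
          rw [← mul_sub, abs_mul, abs_of_nonneg (φ.nonneg_normed t)]
          refine mul_le_mul_of_nonneg_left ?_ (φ.nonneg_normed t)
          have := hg.dist_le_mul (x - t) (y - t)
          rwa [Real.dist_eq, NNReal.coe_one, one_mul, dist_sub_right] at this
      _ = _ := by rw [integral_mul_const, φ.integral_normed, NNReal.coe_one]
  · intro x
    have := φ.dist_normed_convolution_le (μ := volume) (g := g) (x₀ := x) (ε := δ)
      hg.continuous.aestronglyMeasurable (fun y hy => ?_)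
    · rwa [Real.dist_eq] at this
    · have h1 := hg.dist_le_mul y x
      have h2 : dist y x < δ := hy
      simp at h1
      linarith

/-! ### Integration over the sphere -/

lemma continuous_pairRot {d : ℕ} (σ : Equiv.Perm (Fin d)) (c : Fin d → ℝ) :
    Continuous fun p : ℝ × EuclideanSpace ℝ (Fin d) => pairRot σ c p.1 p.2 := by
  have h1 : Continuous (fixedPart σ) := LinearMap.continuous_of_finiteDimensional _
  have h2 : Continuous (pairGen σ c) := LinearMap.continuous_of_finiteDimensional _
  simp only [pairRot_apply]
  fun_prop

/-- Integrate the derivative of `F` along the orbit `θ ↦ R θ x`, `0 ≤ θ ≤ π`, and use that each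
`R θ` preserves `μ`. -/
lemma integral_abs_pairRot_sub_le {d : ℕ}
    {μ : Measure (Metric.sphere (0 : EuclideanSpace ℝ (Fin d)) 1)} [IsProbabilityMeasure μ]
    (hμ : ∀ e : EuclideanSpace ℝ (Fin d) ≃ₗᵢ[ℝ] EuclideanSpace ℝ (Fin d),
      μ.map (sphereRot e) = μ)
    {F : EuclideanSpace ℝ (Fin d) → ℝ} (hF : ContDiff ℝ 1 F)
    (σ : Equiv.Perm (Fin d)) (c : Fin d → ℝ)
    (hσ : ∀ i, σ (σ i) = i) (hc : ∀ i, c (σ i) = -c i) (hc1 : ∀ i, σ i ≠ i → c i ^ 2 = 1) :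
    ∫ x, |F (pairRot σ c Real.pi x) - F x| ∂μ
      ≤ Real.pi * ∫ x, |fderiv ℝ F x (pairGen σ c x)| ∂μ := by
  have hR := continuous_pairRot σ c
  have hJ : Continuous (pairGen σ c) := LinearMap.continuous_of_finiteDimensional _
  have hRpi : Continuous (pairRot σ c Real.pi) := LinearMap.continuous_of_finiteDimensional _
  obtain ⟨G, hG⟩ : ∃ G : EuclideanSpace ℝ (Fin d) → ℝ,
      ∀ x, G x = fderiv ℝ F x (pairGen σ c x) := ⟨_, fun _ => rfl⟩
  have hFder : Continuous (fderiv ℝ F) := hF.continuous_fderiv one_ne_zero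
  have hGc : Continuous G := by
    rw [funext hG]
    exact hFder.clm_apply hJ
  have hRx : ∀ x : EuclideanSpace ℝ (Fin d), Continuous fun θ : ℝ => pairRot σ c θ x :=
    fun x => continuous_iff_continuousAt.mpr fun θ =>
      (hasDerivAt_pairRot σ c hσ hc hc1 x θ).continuousAt
  have hFTC : ∀ x, ∫ θ in (0 : ℝ)..Real.pi, G (pairRot σ c θ x)
      = F (pairRot σ c Real.pi x) - F x := by
    intro x
    rw [intervalIntegral.integral_eq_sub_of_hasDerivAt (f := fun θ => F (pairRot σ c θ x))]
    · simp [pairRot_apply]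
    · intro θ _
      rw [hG]
      exact ((hF.differentiable one_ne_zero _).hasFDerivAt).comp_hasDerivAt θ
        (hasDerivAt_pairRot σ c hσ hc hc1 x θ)
    · exact (hGc.comp (hRx x)).intervalIntegrable _ _
  have hjoint : Continuous fun p : ℝ × Metric.sphere (0 : EuclideanSpace ℝ (Fin d)) 1 =>
      |G (pairRot σ c p.1 p.2)| :=
    (hGc.comp (hR.comp (continuous_fst.prodMk (continuous_subtype_val.comp continuous_snd)))).abs
  have hint : Integrable (Function.uncurry fun (θ : ℝ)
      (x : Metric.sphere (0 : EuclideanSpace ℝ (Fin d)) 1) => |G (pairRot σ c θ x)|)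
      ((volume.restrict (Set.uIoc 0 Real.pi)).prod μ) := by
    have h1 : (volume.restrict (Set.uIoc 0 Real.pi)).prod μ
        = ((volume : Measure ℝ).prod μ).restrict (Set.uIoc 0 Real.pi ×ˢ Set.univ) := by
      rw [← Measure.prod_restrict, Measure.restrict_univ]
    rw [h1]
    have h2 : IntegrableOn (fun p : ℝ × Metric.sphere (0 : EuclideanSpace ℝ (Fin d)) 1 =>
        |G (pairRot σ c p.1 p.2)|) (Set.uIcc 0 Real.pi ×ˢ Set.univ)
        ((volume : Measure ℝ).prod μ) :=
      hjoint.continuousOn.integrableOn_compact (isCompact_uIcc.prod isCompact_univ)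
    exact h2.mono_set (Set.prod_mono Set.uIoc_subset_uIcc le_rfl)
  have hinv : ∀ θ : ℝ, ∫ x : Metric.sphere (0 : EuclideanSpace ℝ (Fin d)) 1,
      |G (pairRot σ c θ x)| ∂μ
        = ∫ x : Metric.sphere (0 : EuclideanSpace ℝ (Fin d)) 1, |G x| ∂μ := by
    intro θ
    have hcont : Continuous (sphereRot (pairRotEquiv σ c hσ hc hc1 θ)) :=
      ((pairRotEquiv σ c hσ hc hc1 θ).continuous.comp continuous_subtype_val).subtype_mk _
    conv_rhs => rw [← hμ (pairRotEquiv σ c hσ hc hc1 θ)]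
    exact (integral_map hcont.aemeasurable
      (f := fun x : Metric.sphere (0 : EuclideanSpace ℝ (Fin d)) 1 => |G x|)
      (hGc.comp continuous_subtype_val).abs.aestronglyMeasurable).symm
  calc ∫ x : Metric.sphere (0 : EuclideanSpace ℝ (Fin d)) 1,
        |F (pairRot σ c Real.pi x) - F x| ∂μ
      ≤ ∫ x : Metric.sphere (0 : EuclideanSpace ℝ (Fin d)) 1,
          (∫ θ in (0 : ℝ)..Real.pi, |G (pairRot σ c θ x)|) ∂μ := by
        refine integral_mono ?_ ?_ fun x => ?_
        · refine Continuous.integrable_of_hasCompactSupport ?_ (HasCompactSupport.of_compactSpace _)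
          exact ((hF.continuous.comp (hRpi.comp continuous_subtype_val)).sub
            (hF.continuous.comp continuous_subtype_val)).abs
        · simp only [intervalIntegral.integral_of_le Real.pi_pos.le]
          rw [Set.uIoc_of_le Real.pi_pos.le] at hint
          exact hint.integral_prod_right
        · simp only
          rw [← hFTC]
          exact intervalIntegral.abs_integral_le_integral_abs Real.pi_pos.le
    _ = ∫ θ in (0 : ℝ)..Real.pi, ∫ x : Metric.sphere (0 : EuclideanSpace ℝ (Fin d)) 1,
          |G (pairRot σ c θ x)| ∂μ := (intervalIntegral_integral_swap hint).symm
    _ = _ := by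
        simp only [hinv]
        simp [hG]

/-- The mean is at most the root mean square. -/
lemma sum_le_of_sum_sq_le {κ : Type*} [Fintype κ] (a : κ → ℝ) {s : ℝ} (hs : 0 ≤ s)
    (h : ∑ p, a p ^ 2 ≤ Fintype.card κ * s ^ 2) : ∑ p, a p ≤ Fintype.card κ * s := by
  refine abs_le_of_sq_le_sq' ?_ (by positivity) |>.2
  calc (∑ p, a p) ^ 2 ≤ Fintype.card κ * ∑ p, a p ^ 2 := by
        simpa using sq_sum_le_card_mul_sum_sq (s := Finset.univ) (f := a)
    _ ≤ Fintype.card κ * (Fintype.card κ * s ^ 2) := by gcongr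
    _ = _ := by ring

lemma sum_abs_fderiv_pairGen_le {d : ℕ} [NeZero d] (L : EuclideanSpace ℝ (Fin d) →L[ℝ] ℝ)
    (hL : ‖L‖ ≤ 1) (x : EuclideanSpace ℝ (Fin d)) (hx : ‖x‖ = 1) :
    ∑ p : Fin d × (Fin d → ℤˣ),
        |L (pairGen (Equiv.subLeft p.1) (pairSign (Equiv.subLeft p.1) p.2) x)|
      ≤ Fintype.card (Fin d × (Fin d → ℤˣ)) * (√2 / √d) := by
  have hd : (0 : ℝ) < d := by exact_mod_cast NeZero.pos d
  refine sum_le_of_sum_sq_le _ (by positivity) ?_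
  set v := (InnerProductSpace.toDual ℝ _).symm L with hv
  have hLv : ∀ y, L y = ∑ i, v i * y i := by
    intro y
    rw [← InnerProductSpace.toDual_symm_apply (𝕜 := ℝ) (x := y) (y := L), PiLp.inner_apply]
    exact Finset.sum_congr rfl fun i _ => by simp [hv, mul_comm]
  have hvn : ∑ i, v i ^ 2 ≤ 1 := by
    rw [← EuclideanSpace.real_norm_sq_eq, hv, LinearIsometryEquiv.norm_map]
    exact pow_le_one₀ (norm_nonneg _) hL
  have hxn : ∑ i, x i ^ 2 = 1 := by
    rw [← EuclideanSpace.real_norm_sq_eq, hx, one_pow]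
  have := sum_matching_sq_le v x hvn hxn
  rw [Fintype.sum_prod_type]
  simp only [sq_abs, hLv]
  refine this.trans (le_of_eq ?_)
  rw [Fintype.card_prod, Fintype.card_fin, div_pow, Real.sq_sqrt zero_le_two, Real.sq_sqrt hd.le]
  push_cast
  field_simp

/-- Each coordinate `i` is fixed by `i ↦ r - i` for exactly one `r`, namely `r = i + i`. -/
lemma sum_norm_fixedPart_le {d : ℕ} [NeZero d] (x : EuclideanSpace ℝ (Fin d)) (hx : ‖x‖ = 1) :
    ∑ p : Fin d × (Fin d → ℤˣ), ‖fixedPart (Equiv.subLeft p.1) x‖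
      ≤ Fintype.card (Fin d × (Fin d → ℤˣ)) * (1 / √d) := by
  have hd : (0 : ℝ) < d := by exact_mod_cast NeZero.pos d
  refine sum_le_of_sum_sq_le _ (by positivity) (le_of_eq ?_)
  have hxn : ∑ i, x i ^ 2 = 1 := by
    rw [← EuclideanSpace.real_norm_sq_eq, hx, one_pow]
  have h1 : ∑ r : Fin d, ‖fixedPart (Equiv.subLeft r) x‖ ^ 2 = 1 := by
    simp only [EuclideanSpace.real_norm_sq_eq]
    rw [Finset.sum_comm, ← hxn]
    refine Finset.sum_congr rfl fun i _ => ?_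
    simp [fixedPart, sub_eq_iff_eq_add]
  rw [Fintype.sum_prod_type, Fintype.card_prod, Fintype.card_fin, div_pow, Real.sq_sqrt hd.le]
  simp only [Finset.sum_const, Finset.card_univ, ← Finset.smul_sum, h1]
  simp
  field_simp

lemma integral_antipodal_smooth_le {d : ℕ} [NeZero d]
    {μ : Measure (Metric.sphere (0 : EuclideanSpace ℝ (Fin d)) 1)} [IsProbabilityMeasure μ]
    (hμ : ∀ e : EuclideanSpace ℝ (Fin d) ≃ₗᵢ[ℝ] EuclideanSpace ℝ (Fin d),
      μ.map (sphereRot e) = μ)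
    {F : EuclideanSpace ℝ (Fin d) → ℝ} (hF : ContDiff ℝ 1 F) (hF1 : LipschitzWith 1 F) :
    ∫ x : Metric.sphere (0 : EuclideanSpace ℝ (Fin d)) 1, |F x - F (-x)| ∂μ
      ≤ (Real.pi * √2 + 2) / √d := by
  -- `κ` indexes the matchings `i ↦ r - i` together with their orientations.
  let κ := Fin d × (Fin d → ℤˣ)
  let σ : κ → Equiv.Perm (Fin d) := fun p => Equiv.subLeft p.1
  let c : κ → Fin d → ℝ := fun p => pairSign (σ p) p.2
  have hσ : ∀ p i, σ p (σ p i) = i := fun p i => by simp [σ]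
  have hN : (0 : ℝ) < Fintype.card κ := by exact_mod_cast Fintype.card_pos
  have hcI : ∀ {h : EuclideanSpace ℝ (Fin d) → ℝ}, Continuous h →
      Integrable (fun x : Metric.sphere (0 : EuclideanSpace ℝ (Fin d)) 1 => h x) μ :=
    fun hh => (hh.comp continuous_subtype_val).integrable_of_hasCompactSupport
      (HasCompactSupport.of_compactSpace _)
  have hfix : ∀ p, Continuous (fixedPart (σ p)) :=
    fun p => LinearMap.continuous_of_finiteDimensional _
  have hgen : ∀ p, Continuous (pairGen (σ p) (c p)) :=
    fun p => LinearMap.continuous_of_finiteDimensional _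
  have hrot : ∀ p, Continuous (pairRot (σ p) (c p) Real.pi) :=
    fun p => LinearMap.continuous_of_finiteDimensional _
  have hFc := hF.continuous
  have hFder : Continuous (fderiv ℝ F) := hF.continuous_fderiv one_ne_zero
  have hder : ∀ p, Continuous fun x => |fderiv ℝ F x (pairGen (σ p) (c p) x)| :=
    fun p => (hFder.clm_apply (hgen p)).abs
  have hone : ∀ p : κ, ∫ x : Metric.sphere (0 : EuclideanSpace ℝ (Fin d)) 1, |F x - F (-x)| ∂μ
      ≤ Real.pi * ∫ x : Metric.sphere (0 : EuclideanSpace ℝ (Fin d)) 1,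
          |fderiv ℝ F x (pairGen (σ p) (c p) x)| ∂μ
        + 2 * ∫ x : Metric.sphere (0 : EuclideanSpace ℝ (Fin d)) 1, ‖fixedPart (σ p) x‖ ∂μ := by
    intro p
    have h1 := integral_abs_pairRot_sub_le hμ hF (σ p) (c p) (hσ p)
      (pairSign_anti (σ p) (hσ p) p.2) (pairSign_sq (σ p) p.2)
    have i1 := hcI (h := fun x => |F (pairRot (σ p) (c p) Real.pi x) - F x|) (by fun_prop)
    have i2 := hcI (h := fun x => 2 * ‖fixedPart (σ p) x‖) (by fun_prop)
    refine le_trans ?_ (add_le_add_left h1 _)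
    rw [← integral_const_mul, ← integral_add i1 i2]
    refine integral_mono (hcI (h := fun x => |F x - F (-x)|) (by fun_prop)) (i1.add i2) fun x => ?_
    simp only
    have h2 : |F (pairRot (σ p) (c p) Real.pi x) - F (-x)| ≤ 2 * ‖fixedPart (σ p) x‖ := by
      have h3 := hF1.dist_le_mul (pairRot (σ p) (c p) Real.pi x) (-x)
      have h4 : pairRot (σ p) (c p) Real.pi x - (-(x : EuclideanSpace ℝ (Fin d)))
          = (2 : ℝ) • fixedPart (σ p) x := by
        rw [pairRot_apply, Real.cos_pi, Real.sin_pi]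
        module
      rw [dist_eq_norm, dist_eq_norm, h4, norm_smul, Real.norm_eq_abs] at h3
      simpa using h3
    have h5 := abs_sub_le (F x) (F (pairRot (σ p) (c p) Real.pi x)) (F (-x))
    rw [abs_sub_comm (F x) (F (pairRot (σ p) (c p) Real.pi x))] at h5
    linarith
  have hsum := Finset.sum_le_sum fun p (_ : p ∈ Finset.univ) => hone p
  rw [Finset.sum_add_distrib, ← Finset.mul_sum, ← Finset.mul_sum,
    ← integral_finsetSum _ (fun p _ => hcI (hder p)),
    ← integral_finsetSum _ (fun p _ => hcI (hfix p).norm)] at hsum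
  have hb1 : ∫ x : Metric.sphere (0 : EuclideanSpace ℝ (Fin d)) 1,
      ∑ p, |fderiv ℝ F x (pairGen (σ p) (c p) x)| ∂μ ≤ Fintype.card κ * (√2 / √d) := by
    have hnorm : ∀ x, ‖fderiv ℝ F x‖ ≤ 1 :=
      fun x => by simpa using norm_fderiv_le_of_lipschitz ℝ (x₀ := x) hF1
    have := integral_mono (μ := μ)
      (integrable_finsetSum Finset.univ (fun p _ => hcI (hder p)))
      (integrable_const (Fintype.card κ * (√2 / √d))) (fun x => sum_abs_fderiv_pairGen_le
        (fderiv ℝ F x) (hnorm x) x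
        (mem_sphere_zero_iff_norm.mp x.2))
    simpa using this
  have hb2 : ∫ x : Metric.sphere (0 : EuclideanSpace ℝ (Fin d)) 1,
      ∑ p, ‖fixedPart (σ p) x‖ ∂μ ≤ Fintype.card κ * (1 / √d) := by
    have hpt : ∀ x : Metric.sphere (0 : EuclideanSpace ℝ (Fin d)) 1,
        ∑ p, ‖fixedPart (σ p) (x : EuclideanSpace ℝ (Fin d))‖ ≤ Fintype.card κ * (1 / √d) :=
      fun x => sum_norm_fixedPart_le (x : EuclideanSpace ℝ (Fin d))
        (mem_sphere_zero_iff_norm.mp x.2)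
    have := integral_mono (μ := μ)
      (integrable_finsetSum Finset.univ (fun p _ => hcI (hfix p).norm))
      (integrable_const (Fintype.card κ * (1 / √d))) hpt
    simpa using this
  rw [Finset.sum_const, Finset.card_univ, nsmul_eq_mul] at hsum
  refine le_of_mul_le_mul_left (hsum.trans ?_) hN
  calc _ ≤ Real.pi * (Fintype.card κ * (√2 / √d)) + 2 * (Fintype.card κ * (1 / √d)) := by
        gcongr
    _ = _ := by ring

lemma integral_antipodal_le {d : ℕ} [NeZero d]
    {μ : Measure (Metric.sphere (0 : EuclideanSpace ℝ (Fin d)) 1)} [IsProbabilityMeasure μ]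
    (hμ : ∀ e : EuclideanSpace ℝ (Fin d) ≃ₗᵢ[ℝ] EuclideanSpace ℝ (Fin d),
      μ.map (sphereRot e) = μ)
    {f : Metric.sphere (0 : EuclideanSpace ℝ (Fin d)) 1 → ℝ} (hf : LipschitzWith 1 f) :
    ∫ x, |f x - f (-x)| ∂μ ≤ (Real.pi * √2 + 2) / √d := by
  obtain ⟨g, hg, hfg⟩ : ∃ g : EuclideanSpace ℝ (Fin d) → ℝ, LipschitzWith 1 g ∧
      ∀ x : Metric.sphere (0 : EuclideanSpace ℝ (Fin d)) 1, f x = g x := by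
    let fExt : EuclideanSpace ℝ (Fin d) → ℝ := Function.extend Subtype.val f 0
    have hfExt : ∀ x : Metric.sphere (0 : EuclideanSpace ℝ (Fin d)) 1, fExt x = f x :=
      fun x => Subtype.val_injective.extend_apply _ _ x
    have hl : LipschitzOnWith 1 fExt (Metric.sphere 0 1) := by
      rw [lipschitzOnWith_iff_restrict]
      convert hf using 1
      funext x
      exact hfExt x
    obtain ⟨g, hg, h⟩ := hl.extend_real
    exact ⟨g, hg, fun x => by rw [← hfExt, h x.2]⟩
  refine le_of_forall_pos_le_add fun δ hδ => ?_
  obtain ⟨F, hF, hF1, hFg⟩ := exists_smooth_approx hg (half_pos hδ)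
  have hcI : ∀ {h : Metric.sphere (0 : EuclideanSpace ℝ (Fin d)) 1 → ℝ}, Continuous h →
      Integrable h μ :=
    fun hh => hh.integrable_of_hasCompactSupport (HasCompactSupport.of_compactSpace _)
  have hfc := hf.continuous
  have hFc := hF.continuous
  have i1 := hcI (h := fun x => |F x - F (-x)|) (by fun_prop)
  calc ∫ x, |f x - f (-x)| ∂μ
      ≤ ∫ x : Metric.sphere (0 : EuclideanSpace ℝ (Fin d)) 1, (|F x - F (-x)| + δ) ∂μ := by
        refine integral_mono (hcI (by fun_prop)) (i1.add (integrable_const _)) fun x => ?_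
        simp only
        have h1 := abs_le.mp (hFg x)
        have h2 := abs_le.mp (hFg (-x))
        have h3 := le_abs_self (F x - F (-x))
        have h4 := neg_abs_le (F x - F (-x))
        rw [hfg, hfg, coe_neg_sphere]
        exact abs_le.mpr ⟨by linarith, by linarith⟩
    _ = ∫ x : Metric.sphere (0 : EuclideanSpace ℝ (Fin d)) 1, |F x - F (-x)| ∂μ + δ := by
        rw [integral_add i1 (integrable_const _)]
        simp
    _ ≤ _ := by
        gcongr
        exact integral_antipodal_smooth_le hμ hF hF1

lemma integral_antipodal_le_two {d : ℕ}
    {μ : Measure (Metric.sphere (0 : EuclideanSpace ℝ (Fin d)) 1)} [IsProbabilityMeasure μ]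
    {f : Metric.sphere (0 : EuclideanSpace ℝ (Fin d)) 1 → ℝ} (hf : LipschitzWith 1 f) :
    ∫ x, |f x - f (-x)| ∂μ ≤ 2 := by
  have hfc := hf.continuous
  have h := integral_mono (μ := μ) (f := fun x => |f x - f (-x)|) (g := fun _ => 2)
    ((show Continuous fun x => |f x - f (-x)| by fun_prop).integrable_of_hasCompactSupport
      (HasCompactSupport.of_compactSpace _)) (integrable_const _) (fun x => ?_)
  · simpa using h
  · have h1 := hf.dist_le_mul x (-x)
    have h2 : ‖(x : EuclideanSpace ℝ (Fin d))‖ = 1 := mem_sphere_zero_iff_norm.mp x.2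
    have h3 : dist x (-x) = 2 := by
      rw [Subtype.dist_eq, dist_eq_norm, coe_neg_sphere, sub_neg_eq_add, ← two_smul ℝ,
        norm_smul, h2]
      simp
    rw [h3, Real.dist_eq] at h1
    simpa using h1

/-- Levy's concentration inequality applied to antipodes: if `d ≥ 4`, `μ` is the
rotation-invariant probability measure on `S^{d-1}` and `f` is `1`-Lipschitz, then
`∫ |f(x) - f(-x)| dμ ≤ 12 e^{-dε²/8} + 2ε` for every `ε > 0`; consequently
`∫ |f(x) - f(-x)| dμ ≤ C d^{-1/2} (log d)^{1/2}` for a universal constant `C`. -/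
theorem sphere_antipodal_concentration : ∃ C : ℝ, 0 < C ∧ ∀ d : ℕ, 4 ≤ d →
    ∀ μ : Measure (Metric.sphere (0 : EuclideanSpace ℝ (Fin d)) 1),
      IsProbabilityMeasure μ →
      (∀ e : EuclideanSpace ℝ (Fin d) ≃ₗᵢ[ℝ] EuclideanSpace ℝ (Fin d),
        μ.map (sphereRot e) = μ) →
      ∀ f : Metric.sphere (0 : EuclideanSpace ℝ (Fin d)) 1 → ℝ, LipschitzWith 1 f →
        (∀ ε : ℝ, 0 < ε →
          ∫ x, |f x - f (-x)| ∂μ ≤ 12 * Real.exp (-(d * ε ^ 2) / 8) + 2 * ε) ∧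
        ∫ x, |f x - f (-x)| ∂μ ≤ C * Real.sqrt (Real.log d) / Real.sqrt d := by
  refine ⟨13 / 2, by norm_num, fun d hd μ _ hμ f hf => ?_⟩
  have : NeZero d := ⟨by omega⟩
  have hd4 : (4 : ℝ) ≤ d := by exact_mod_cast hd
  have hsd : 0 < √(d : ℝ) := Real.sqrt_pos.mpr (by linarith)
  have hK : Real.pi * √2 + 2 ≤ 13 / 2 := by
    have h1 := Real.pi_lt_d2
    have h2 : √2 ≤ 1.42 := Real.sqrt_le_iff.mpr ⟨by norm_num, by norm_num⟩
    nlinarith [Real.pi_pos, Real.sqrt_nonneg 2]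
  have hI : ∫ x, |f x - f (-x)| ∂μ ≤ 13 / 2 / √d :=
    (integral_antipodal_le hμ hf).trans (by gcongr)
  refine ⟨fun ε hε => ?_, ?_⟩
  · have hexp := Real.exp_pos (-(d * ε ^ 2) / 8)
    rcases le_total (13 / 2 / √d) (2 * ε) with h | h
    · linarith
    · -- Here `d * ε ^ 2 / 8 ≤ 3 / 2`, so the exponential term alone is at least the trivial
      -- bound `2`.
      have h1 : ε * √d ≤ 13 / 4 := by
        rw [le_div_iff₀ hsd] at h
        linarith
      have h2 : d * ε ^ 2 ≤ 12 := by
        have h3 : (ε * √d) ^ 2 ≤ (13 / 4) ^ 2 := by gcongr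
        rw [mul_pow, Real.sq_sqrt (by linarith)] at h3
        nlinarith
      have h3 : Real.exp (3 / 2) ≤ 6 := by
        have h4 : Real.exp (3 / 2) ^ 2 = Real.exp 1 ^ 3 := by
          rw [← Real.exp_nat_mul, ← Real.exp_nat_mul]; norm_num
        have h5 : Real.exp 1 ^ 3 ≤ 3 ^ 3 := by
          gcongr
          exact Real.exp_one_lt_three.le
        nlinarith [Real.exp_pos (3 / 2)]
      have h4 : (1 : ℝ) / 6 ≤ Real.exp (-(d * ε ^ 2) / 8) := by
        calc (1 : ℝ) / 6 ≤ (Real.exp (3 / 2))⁻¹ := by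
              rw [one_div]; gcongr
          _ = Real.exp (-(3 / 2)) := (Real.exp_neg _).symm
          _ ≤ _ := by
              apply Real.exp_le_exp.mpr
              linarith
      linarith [integral_antipodal_le_two (μ := μ) hf]
  · have hlog : 1 ≤ Real.log d := by
      rw [Real.le_log_iff_exp_le (by linarith)]
      linarith [Real.exp_one_lt_three]
    have hs : 1 ≤ √(Real.log d) := Real.one_le_sqrt.mpr hlog
    refine hI.trans ?_
    gcongr
    linarith
end
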